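/- arXiv:2505.08486 — 2 statements merged into one kernel-verified Lean document; each statement's English description precedes it below -/
import Mathlib

section
/- Let m>1 and t>2. There is a constant C = C(m) > 0 such that for every Schwartz function Ω on ℝ², ‖∂_X Δ_t^{-1} Ω‖_{L^∞(ℝ²)} + ⟨t⟩ ‖∂_Y Δ_t^{-1} Ω‖_{L^∞(ℝ²)} ≤ C ⟨t⟩^{3/2} ‖Ω‖_{L^{2m/(m−1)}(ℝ²)}^{1/2} ‖Ω‖_{L^{2m/(m+1)}(ℝ²)}^{1/2}. -/
open MeasureTheory SchwartzMap
open scoped ENNReal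

/-- The Fourier symbol `q_t(ξ,η)` of `-Δ_t`. -/
noncomputable def qsym (t ξ η : ℝ) : ℝ :=
  (1 + t ^ 2 / 3)⁻¹ * (ξ - t / 2 * (1 + t ^ 2 / 12) ^ (-(1 : ℝ) / 2) * η) ^ 2
    + (1 + t ^ 2 / 3) * (1 + t ^ 2 / 12)⁻¹ * η ^ 2

/-- The Fourier transform `f̂(ξ,η) = ∫ f(X,Y) e^{-i(Xξ + Yη)} dX dY`. -/
noncomputable def ft2 (f : ℝ × ℝ → ℂ) (ξ η : ℝ) : ℂ :=
  ∫ p : ℝ × ℝ, f p * Complex.exp (-Complex.I * ((p.1 * ξ + p.2 * η : ℝ) : ℂ))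

/-- `∂_X Δ_t⁻¹ f`: the function whose Fourier transform is `-i ξ q_t(ξ,η)⁻¹ f̂(ξ,η)`,
realized by the inverse Fourier integral. -/
noncomputable def dxInvLap (t : ℝ) (f : ℝ × ℝ → ℂ) : ℝ × ℝ → ℂ :=
  fun P => (((2 * Real.pi) ^ (-2 : ℤ) : ℝ) : ℂ) *
    ∫ w : ℝ × ℝ,
      -Complex.I * (w.1 : ℂ) / ((qsym t w.1 w.2 : ℝ) : ℂ) * ft2 f w.1 w.2 *
        Complex.exp (Complex.I * ((P.1 * w.1 + P.2 * w.2 : ℝ) : ℂ))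

/-- `∂_Y Δ_t⁻¹ f`: the function whose Fourier transform is `-i η q_t(ξ,η)⁻¹ f̂(ξ,η)`,
realized by the inverse Fourier integral. -/
noncomputable def dyInvLap (t : ℝ) (f : ℝ × ℝ → ℂ) : ℝ × ℝ → ℂ :=
  fun P => (((2 * Real.pi) ^ (-2 : ℤ) : ℝ) : ℂ) *
    ∫ w : ℝ × ℝ,
      -Complex.I * (w.2 : ℂ) / ((qsym t w.1 w.2 : ℝ) : ℂ) * ft2 f w.1 w.2 *
        Complex.exp (Complex.I * ((P.1 * w.1 + P.2 * w.2 : ℝ) : ℂ))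

/-!
For a positive definite form `q` write `1 / q = ∫₀^∞ e^{-sq} ds`, so that `∂ₖ Δ⁻¹ f` becomes an
integral over `s` of heat flows `∂ₖ e^{sΔ} f`. The kernel of `∂ₖ e^{sΔ}` is explicit: a shear
diagonalises `q`, and one-dimensional Gaussian integrals give a Gaussian in the inverse form `q*`
times a linear factor of size at most `√q*(k) √q*(z)`. Hölder's inequality then bounds
`‖∂ₖ e^{sΔ} f‖_∞` by a multiple of `s^{-1/2-1/p} ‖f‖_p`, that is, of `s^{δ-1}` and of `s^{-δ-1}`
when `1/p = 1/2 ∓ δ`. Using the first bound for small and the second for large `s`, and optimising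
the splitting time, produces the geometric mean of the two norms. For `q_t` and `δ = 1/(2m)` one has
`q_t*(1, 0) ≤ ⟨t⟩²` and `q_t*(0, 1) ≤ 1`, while `(det q_t)^{-1/4}` contributes at most `⟨t⟩^{1/2}`.
-/

lemma ofReal_sqrt_lpNorm_mul_lpNorm {X E : Type*} [MeasurableSpace X] {μ : Measure X}
    [NormedAddCommGroup E] {f : X → E} {p q : ℝ≥0∞} (hp : MemLp f p μ) (hq : MemLp f q μ) :
    ENNReal.ofReal √(lpNorm f p μ * lpNorm f q μ) =
      eLpNorm f p μ ^ (1 / 2 : ℝ) * eLpNorm f q μ ^ (1 / 2 : ℝ) := by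
  rw [Real.sqrt_eq_rpow, ← ENNReal.ofReal_rpow_of_nonneg (mul_nonneg lpNorm_nonneg lpNorm_nonneg)
    (by norm_num), ENNReal.ofReal_mul lpNorm_nonneg, ofReal_lpNorm hp, ofReal_lpNorm hq,
    ENNReal.mul_rpow_of_nonneg _ _ (by norm_num)]

section Subordination

open Set Real

variable {X E : Type*} [MeasurableSpace X] {μ : Measure X} [NormedAddCommGroup E] [NormedSpace ℝ E]

lemma integrableOn_exp_neg_mul_Ioi {c : ℝ} (hc : 0 < c) :
    IntegrableOn (fun s => exp (-(s * c))) (Ioi 0) := by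
  simpa only [neg_mul, mul_comm c] using integrableOn_exp_mul_Ioi (neg_lt_zero.2 hc) 0

lemma integral_exp_neg_mul_Ioi {c : ℝ} (hc : 0 < c) :
    ∫ s in Ioi (0 : ℝ), exp (-(s * c)) = c⁻¹ := by
  simpa [neg_mul, mul_comm c, neg_div_neg_eq] using integral_exp_mul_Ioi (neg_lt_zero.2 hc) 0

theorem integral_inv_smul_eq_integral_Ioi_integral_exp_smul [SFinite μ] [CompleteSpace E]
    {q : X → ℝ} {g : X → E} (hq : AEStronglyMeasurable q μ) (hq_pos : ∀ᵐ x ∂μ, 0 < q x)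
    (hg : Integrable (fun x => (q x)⁻¹ • g x) μ) :
    ∫ x, (q x)⁻¹ • g x ∂μ = ∫ s in Ioi (0 : ℝ), ∫ x, exp (-(s * q x)) • g x ∂μ := by
  have hg_meas : AEStronglyMeasurable g μ := by
    refine (hq.smul hg.aestronglyMeasurable).congr ?_
    filter_upwards [hq_pos] with x hx
    exact smul_inv_smul₀ hx.ne' (g x)
  have h_inner : ∀ᵐ x ∂μ, ∫ s in Ioi (0 : ℝ), exp (-(s * q x)) • g x = (q x)⁻¹ • g x := by
    filter_upwards [hq_pos] with x hx
    rw [integral_smul_const, integral_exp_neg_mul_Ioi hx]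
  have h_inner_norm : ∀ᵐ x ∂μ,
      ∫ s in Ioi (0 : ℝ), ‖exp (-(s * q x)) • g x‖ = ‖(q x)⁻¹ • g x‖ := by
    filter_upwards [hq_pos] with x hx
    simp only [norm_smul, norm_of_nonneg (exp_nonneg _), norm_of_nonneg (inv_pos.2 hx).le]
    rw [integral_mul_const, integral_exp_neg_mul_Ioi hx]
  rw [← integral_congr_ae h_inner, integral_integral_swap]
  refine (integrable_prod_iff ?_).2 ⟨?_, hg.norm.congr (h_inner_norm.mono fun _ => Eq.symm)⟩
  · exact (continuous_exp.comp_aestronglyMeasurable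
      (measurable_snd.aestronglyMeasurable.mul hq.comp_fst).neg).smul hg_meas.comp_fst
  · filter_upwards [hq_pos] with x hx
    exact (integrableOn_exp_neg_mul_Ioi hx).smul_const (g x)

lemma norm_integral_Ioi_le_of_norm_le_rpow_split {φ : ℝ → E} {A B δ S : ℝ} (hδ : 0 < δ)
    (hS : 0 < S) (hA : ∀ s ∈ Ioc 0 S, ‖φ s‖ ≤ A * s ^ (δ - 1))
    (hB : ∀ s ∈ Ioi S, ‖φ s‖ ≤ B * s ^ (-δ - 1)) :
    ‖∫ s in Ioi (0 : ℝ), φ s‖ ≤ (A * S ^ δ + B * S ^ (-δ)) / δ := by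
  have h_low : (volume.restrict (Ioi 0)).restrict (Iic S) = volume.restrict (Ioc 0 S) := by
    rw [Measure.restrict_restrict measurableSet_Iic, inter_comm, Ioi_inter_Iic]
  have h_high : (volume.restrict (Ioi 0)).restrict (Iic S)ᶜ = volume.restrict (Ioi S) := by
    rw [Measure.restrict_restrict measurableSet_Iic.compl, compl_Iic, Ioi_inter_Ioi,
      max_eq_left hS.le]
  have h_int_low : IntegrableOn (fun s : ℝ => A * s ^ (δ - 1)) (Ioc 0 S) :=
    ((intervalIntegrable_iff_integrableOn_Ioc_of_le hS.le).1
      (intervalIntegral.intervalIntegrable_rpow' (by linarith))).const_mul A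
  have h_int_high : IntegrableOn (fun s : ℝ => B * s ^ (-δ - 1)) (Ioi S) :=
    (integrableOn_Ioi_rpow_of_lt (by linarith) hS).const_mul B
  have h_val_low : ∫ s in Ioc 0 S, A * s ^ (δ - 1) = A * S ^ δ / δ := by
    rw [integral_const_mul, ← intervalIntegral.integral_of_le hS.le,
      integral_rpow (Or.inl (by linarith)), sub_add_cancel, zero_rpow hδ.ne', sub_zero,
      mul_div_assoc]
  have h_val_high : ∫ s in Ioi S, B * s ^ (-δ - 1) = B * S ^ (-δ) / δ := by
    rw [integral_const_mul, integral_Ioi_rpow_of_lt (by linarith) hS, sub_add_cancel,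
      neg_div_neg_eq, mul_div_assoc]
  calc ‖∫ s in Ioi (0 : ℝ), φ s‖
      ≤ ∫ s in Ioi (0 : ℝ), (Iic S).piecewise (fun s => A * s ^ (δ - 1))
          (fun s => B * s ^ (-δ - 1)) s := by
        refine norm_integral_le_of_norm_le (Integrable.piecewise measurableSet_Iic ?_ ?_) ?_
        · rwa [IntegrableOn, h_low]
        · rwa [IntegrableOn, h_high]
        · filter_upwards [ae_restrict_mem measurableSet_Ioi] with s hs
          by_cases hsS : s ≤ S
          · simpa [hsS] using hA s ⟨hs, hsS⟩
          · simpa [hsS] using hB s (not_le.1 hsS)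
    _ = (A * S ^ δ + B * S ^ (-δ)) / δ := by
        rw [integral_piecewise measurableSet_Iic (by rwa [IntegrableOn, h_low])
          (by rwa [IntegrableOn, h_high]), h_low, h_high, h_val_low, h_val_high, add_div]

theorem norm_integral_Ioi_le_of_norm_le_rpow {φ : ℝ → E} {A B δ : ℝ} (hδ : 0 < δ)
    (hA : ∀ s, 0 < s → ‖φ s‖ ≤ A * s ^ (δ - 1)) (hB : ∀ s, 0 < s → ‖φ s‖ ≤ B * s ^ (-δ - 1)) :
    ‖∫ s in Ioi (0 : ℝ), φ s‖ ≤ 2 / δ * √(A * B) := by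
  have hA_nonneg : 0 ≤ A := by simpa using (norm_nonneg _).trans (hA 1 one_pos)
  have hB_nonneg : 0 ≤ B := by simpa using (norm_nonneg _).trans (hB 1 one_pos)
  by_cases hAB : A = 0 ∨ B = 0
  · have hφ : ∀ s ∈ Ioi (0 : ℝ), φ s = 0 := fun s hs => norm_le_zero_iff.1 <| by
      rcases hAB with rfl | rfl
      · simpa using hA s hs
      · simpa using hB s hs
    rw [setIntegral_eq_zero_of_forall_eq_zero hφ, norm_zero]
    positivity
  · obtain ⟨hA_ne, hB_ne⟩ := not_or.1 hAB
    have hA_pos : 0 < √A := sqrt_pos.2 (hA_nonneg.lt_of_ne' hA_ne)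
    have hB_pos : 0 < √B := sqrt_pos.2 (hB_nonneg.lt_of_ne' hB_ne)
    -- the splitting time at which the two bounds contribute equally
    have hS : 0 < (√B / √A) ^ δ⁻¹ := rpow_pos_of_pos (div_pos hB_pos hA_pos) _
    refine (norm_integral_Ioi_le_of_norm_le_rpow_split hδ hS (fun s hs => hA s hs.1)
      (fun s hs => hB s (hS.trans hs))).trans_eq ?_
    rw [rpow_neg hS.le, rpow_inv_rpow (div_pos hB_pos hA_pos).le hδ.ne', sqrt_mul hA_nonneg]
    nth_rewrite 1 [← mul_self_sqrt hA_nonneg]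
    nth_rewrite 2 [← mul_self_sqrt hB_nonneg]
    field_simp
    ring

end Subordination

section GaussianWave

open Real
open Complex (I)

/-- The one-dimensional Gaussian `e^{-bx²}` modulated by the plane wave `e^{itx}`. -/
noncomputable def gaussianWave (b t x : ℝ) : ℂ :=
  Complex.exp (I * t * x) * Complex.exp (-b * x ^ 2)

variable {b : ℝ}

lemma norm_cexp_I_mul_mul (t x : ℝ) : ‖Complex.exp (I * t * x)‖ = 1 := by
  rw [mul_assoc, mul_comm, ← Complex.ofReal_mul, Complex.norm_exp_ofReal_mul_I]

lemma integrable_gaussianWave (hb : 0 < b) (t : ℝ) : Integrable (gaussianWave b t) :=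
  (integrable_cexp_neg_mul_sq (by simpa using hb)).bdd_mul (by fun_prop)
    (.of_forall fun x => (norm_cexp_I_mul_mul t x).le)

lemma integrable_mul_gaussianWave (hb : 0 < b) (t : ℝ) :
    Integrable fun x : ℝ => x * gaussianWave b t x := by
  refine ((integrable_mul_cexp_neg_mul_sq (b := b) (by simpa using hb)).bdd_mul (by fun_prop)
    (.of_forall fun x => (norm_cexp_I_mul_mul t x).le)).congr (.of_forall fun x => ?_)
  simp only [gaussianWave]
  ring

lemma integral_gaussianWave (hb : 0 < b) (t : ℝ) :
    ∫ x, gaussianWave b t x = (√(π / b) * exp (-(t ^ 2 / (4 * b))) : ℝ) := by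
  have h_sqrt : (π / b : ℂ) ^ (1 / 2 : ℂ) = (√(π / b) : ℝ) := by
    rw [sqrt_eq_rpow, Complex.ofReal_cpow (by positivity)]
    norm_num
  simp only [gaussianWave]
  rw [fourierIntegral_gaussian (by simpa using hb), h_sqrt]
  push_cast
  ring_nf

lemma hasDerivAt_gaussianWave (b t x : ℝ) :
    HasDerivAt (gaussianWave b t)
      (I * t * gaussianWave b t x - 2 * b * (x * gaussianWave b t x)) x := by
  have h_lin : HasDerivAt (fun x : ℝ => I * t * x) (I * t) x := by
    simpa using Complex.ofRealCLM.hasDerivAt.const_mul (I * (t : ℂ))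
  have h_sq : HasDerivAt (fun x : ℝ => -(b : ℂ) * (x : ℂ) ^ 2) (-b * (2 * x)) x := by
    simpa using (Complex.ofRealCLM.hasDerivAt.pow 2).const_mul (-(b : ℂ))
  refine (h_lin.cexp.mul h_sq.cexp).congr_deriv ?_
  simp only [gaussianWave]
  ring

lemma integral_mul_gaussianWave (hb : 0 < b) (t : ℝ) :
    ∫ x : ℝ, x * gaussianWave b t x = I * t / (2 * b) * ∫ x, gaussianWave b t x := by
  have h_int := (integrable_gaussianWave hb t).const_mul (I * t)
  have h_int_mul := (integrable_mul_gaussianWave hb t).const_mul (2 * b)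
  have h_zero := integral_eq_zero_of_hasDerivAt_of_integrable (hasDerivAt_gaussianWave b t)
    (h_int.sub h_int_mul) (integrable_gaussianWave hb t)
  rw [integral_sub h_int h_int_mul, integral_const_mul, integral_const_mul, sub_eq_zero] at h_zero
  have hb' : (b : ℂ) ≠ 0 := Complex.ofReal_ne_zero.2 hb.ne'
  rw [div_mul_eq_mul_div, h_zero]
  field_simp

end GaussianWave

section QuadForm

open Real Set
open Complex (I)

/-- The standard pairing of physical and frequency variables. -/
def planePairing (z w : ℝ × ℝ) : ℝ := z.1 * w.1 + z.2 * w.2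

/-- The character `w ↦ e^{i⟨z, w⟩}`. -/
noncomputable def planeWave (z w : ℝ × ℝ) : ℂ := Complex.exp (I * (planePairing z w : ℝ))

/-- The quadratic form on frequencies with Cholesky parameters `α`, `β`, `σ`. For `α, β > 0` these
are all the positive definite forms on the plane. -/
def quadForm (α β σ : ℝ) (w : ℝ × ℝ) : ℝ := α * (w.1 - σ * w.2) ^ 2 + β * w.2 ^ 2

/-- The quadratic form on physical space dual to `quadForm α β σ`: its matrix is the inverse one. -/
noncomputable def dualForm (α β σ : ℝ) (z : ℝ × ℝ) : ℝ := z.1 ^ 2 / α + (z.2 + σ * z.1) ^ 2 / β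

/-- The shear `(u, v) ↦ (u + σv, v)`, which diagonalises `quadForm α β σ`. -/
def shear (σ : ℝ) : ℝ × ℝ ≃ₜ ℝ × ℝ where
  toFun w := (w.1 + σ * w.2, w.2)
  invFun w := (w.1 - σ * w.2, w.2)
  left_inv w := by simp
  right_inv w := by simp

lemma shear_apply (σ : ℝ) (w : ℝ × ℝ) : shear σ w = (w.1 + σ * w.2, w.2) := rfl

lemma measurePreserving_shear (σ : ℝ) : MeasurePreserving (shear σ) := by
  have h_skew : MeasurePreserving fun p : ℝ × ℝ => (p.1, p.2 + σ * p.1) :=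
    (MeasurePreserving.id volume).skew_product (g := fun x y => y + σ * x) (by fun_prop)
      (.of_forall fun x => map_add_right_eq_self volume (σ * x))
  have h_swap : MeasurePreserving (Prod.swap : ℝ × ℝ → ℝ × ℝ) := Measure.measurePreserving_swap
  exact h_swap.comp (h_skew.comp h_swap)

variable {α β : ℝ}

@[simp]
lemma norm_planeWave (z w : ℝ × ℝ) : ‖planeWave z w‖ = 1 := by
  rw [planeWave, mul_comm, Complex.norm_exp_ofReal_mul_I]

lemma planeWave_add_left (z z' w : ℝ × ℝ) :
    planeWave (z + z') w = planeWave z w * planeWave z' w := by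
  simp only [planeWave, ← Complex.exp_add, ← mul_add, ← Complex.ofReal_add, planePairing,
    Prod.fst_add, Prod.snd_add]
  ring_nf

lemma ft2_eq_integral_planeWave (f : ℝ × ℝ → ℂ) (w : ℝ × ℝ) :
    ft2 f w.1 w.2 = ∫ p, f p * planeWave (-p) w := by
  simp only [ft2, planeWave, planePairing]
  congr! 4
  push_cast [Prod.fst_neg, Prod.snd_neg]
  ring

lemma integral_mul_ft2_mul_planeWave {G f : ℝ × ℝ → ℂ} (hG : Integrable G) (hf : Integrable f)
    (P : ℝ × ℝ) :
    ∫ w, G w * ft2 f w.1 w.2 * planeWave P w =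
      ∫ p, f p * ∫ w, G w * planeWave (P - p) w := by
  have h_integrand (w : ℝ × ℝ) : G w * ft2 f w.1 w.2 * planeWave P w =
      ∫ p, planeWave (P - p) w * (G w * f p) := by
    rw [ft2_eq_integral_planeWave, ← integral_const_mul, ← integral_mul_const]
    congr! 2
    rw [sub_eq_add_neg, planeWave_add_left]
    ring
  have h_integrable :
      Integrable (Function.uncurry fun w p => planeWave (P - p) w * (G w * f p)) :=
    (hG.mul_prod hf).bdd_mul (by unfold planeWave planePairing; fun_prop)
      (.of_forall fun x => (norm_planeWave _ _).le)
  simp_rw [h_integrand]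
  rw [integral_integral_swap h_integrable]
  simp_rw [← integral_const_mul]
  congr! 4
  ring

lemma quadForm_pos (hα : 0 < α) (hβ : 0 < β) (σ : ℝ) {w : ℝ × ℝ} (hw : w ≠ 0) :
    0 < quadForm α β σ w := by
  unfold quadForm
  by_cases hw₂ : w.2 = 0
  · have hw₁ : w.1 ≠ 0 := fun h => hw (Prod.ext h hw₂)
    rw [hw₂]
    simp only [mul_zero, sub_zero]
    positivity
  · positivity

lemma dualForm_nonneg (hα : 0 < α) (hβ : 0 < β) (σ : ℝ) (z : ℝ × ℝ) :
    0 ≤ dualForm α β σ z := by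
  unfold dualForm
  positivity

lemma quadForm_mul_mul (s α β σ : ℝ) (w : ℝ × ℝ) :
    quadForm (s * α) (s * β) σ w = s * quadForm α β σ w := by
  unfold quadForm
  ring

lemma dualForm_mul_mul (s α β σ : ℝ) (z : ℝ × ℝ) :
    dualForm (s * α) (s * β) σ z = s⁻¹ * dualForm α β σ z := by
  simp only [dualForm, div_eq_mul_inv, mul_inv]
  ring

lemma dualForm_eq_quadForm_swap (α β σ : ℝ) (z : ℝ × ℝ) :
    dualForm α β σ z = quadForm β⁻¹ α⁻¹ (-σ) z.swap := by
  simp only [dualForm, quadForm, Prod.fst_swap, Prod.snd_swap, div_eq_mul_inv]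
  ring

@[fun_prop]
lemma continuous_quadForm (α β σ : ℝ) : Continuous (quadForm α β σ) := by
  unfold quadForm
  fun_prop

@[fun_prop]
lemma continuous_dualForm (α β σ : ℝ) : Continuous (dualForm α β σ) := by
  unfold dualForm
  fun_prop

lemma sqrt_div_mul_sqrt_div (hα : 0 < α) (β : ℝ) : √(π / α) * √(π / β) = π / √(α * β) := by
  rw [← sqrt_mul (by positivity), div_mul_div_comm, sqrt_div (by positivity),
    sqrt_mul_self pi_nonneg]

lemma exp_neg_quadForm_shear (α β σ : ℝ) (w : ℝ × ℝ) :
    exp (-quadForm α β σ (shear σ w)) = exp (-α * w.1 ^ 2) * exp (-β * w.2 ^ 2) := by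
  rw [← exp_add]
  simp only [quadForm, shear_apply]
  ring_nf

lemma integrable_exp_neg_quadForm (hα : 0 < α) (hβ : 0 < β) (σ : ℝ) :
    Integrable fun w => exp (-quadForm α β σ w) := by
  rw [← (measurePreserving_shear σ).integrable_comp_emb (shear σ).measurableEmbedding]
  simp only [Function.comp_def, exp_neg_quadForm_shear]
  exact (integrable_exp_neg_mul_sq hα).mul_prod (integrable_exp_neg_mul_sq hβ)

lemma integral_exp_neg_quadForm (hα : 0 < α) (β σ : ℝ) :
    ∫ w, exp (-quadForm α β σ w) = π / √(α * β) := by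
  rw [← (measurePreserving_shear σ).integral_comp (shear σ).measurableEmbedding]
  simp only [exp_neg_quadForm_shear]
  rw [Measure.volume_eq_prod,
    integral_prod_mul (fun u => exp (-α * u ^ 2)) (fun v => exp (-β * v ^ 2)),
    integral_gaussian, integral_gaussian, sqrt_div_mul_sqrt_div hα]

lemma integrable_exp_neg_dualForm (hα : 0 < α) (hβ : 0 < β) (σ : ℝ) :
    Integrable fun z => exp (-dualForm α β σ z) := by
  simp only [dualForm_eq_quadForm_swap]
  exact (integrable_exp_neg_quadForm (inv_pos.2 hβ) (inv_pos.2 hα) (-σ)).swap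

lemma integral_exp_neg_dualForm (α : ℝ) (hβ : 0 < β) (σ : ℝ) :
    ∫ z, exp (-dualForm α β σ z) = π * √(α * β) := by
  simp only [dualForm_eq_quadForm_swap]
  rw [Measure.volume_eq_prod, integral_prod_swap fun z : ℝ × ℝ => exp (-quadForm β⁻¹ α⁻¹ (-σ) z),
    ← Measure.volume_eq_prod, integral_exp_neg_quadForm (inv_pos.2 hβ), ← mul_inv,
    mul_comm β, sqrt_inv, div_inv_eq_mul]

lemma exp_neg_quadForm_mul_planeWave_shear (α β σ : ℝ) (z w : ℝ × ℝ) :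
    exp (-quadForm α β σ (shear σ w)) * planeWave z (shear σ w) =
      gaussianWave α z.1 w.1 * gaussianWave β (z.2 + σ * z.1) w.2 := by
  rw [exp_neg_quadForm_shear]
  simp only [gaussianWave, planeWave, planePairing, shear_apply, Complex.ofReal_mul,
    Complex.ofReal_exp, ← Complex.exp_add]
  congr 1
  push_cast
  ring

lemma planePairing_shear (σ : ℝ) (k w : ℝ × ℝ) :
    planePairing k (shear σ w) = k.1 * w.1 + (k.2 + σ * k.1) * w.2 := by
  simp only [planePairing, shear_apply]
  ring

lemma planePairing_mul_exp_mul_planeWave_shear (α β σ : ℝ) (k z w : ℝ × ℝ) :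
    (planePairing k (shear σ w) * exp (-quadForm α β σ (shear σ w)) : ℝ) *
        planeWave z (shear σ w) =
      k.1 * ((w.1 * gaussianWave α z.1 w.1) * gaussianWave β (z.2 + σ * z.1) w.2) +
        (k.2 + σ * k.1 : ℝ) *
          (gaussianWave α z.1 w.1 * (w.2 * gaussianWave β (z.2 + σ * z.1) w.2)) := by
  rw [Complex.ofReal_mul, mul_assoc, exp_neg_quadForm_mul_planeWave_shear, planePairing_shear]
  push_cast
  ring

lemma integrable_planePairing_mul_exp_neg_quadForm (hα : 0 < α) (hβ : 0 < β) (σ : ℝ)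
    (k : ℝ × ℝ) : Integrable fun w => planePairing k w * exp (-quadForm α β σ w) := by
  rw [← (measurePreserving_shear σ).integrable_comp_emb (shear σ).measurableEmbedding]
  have h_fst := ((integrable_mul_exp_neg_mul_sq hα).mul_prod
    (integrable_exp_neg_mul_sq hβ)).const_mul k.1
  have h_snd := ((integrable_exp_neg_mul_sq hα).mul_prod
    (integrable_mul_exp_neg_mul_sq hβ)).const_mul (k.2 + σ * k.1)
  refine (h_fst.add h_snd).congr (.of_forall fun w => ?_)
  simp only [Function.comp_apply, Pi.add_apply, planePairing_shear, exp_neg_quadForm_shear]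
  ring

theorem integral_planePairing_mul_exp_neg_quadForm_mul_planeWave (hα : 0 < α) (hβ : 0 < β)
    (σ : ℝ) (k z : ℝ × ℝ) :
    ∫ w, (planePairing k w * exp (-quadForm α β σ w) : ℝ) * planeWave z w =
      I / 2 * ((k.1 * z.1 / α + (k.2 + σ * k.1) * (z.2 + σ * z.1) / β) *
        (π / √(α * β) * exp (-dualForm α β σ z / 4)) : ℝ) := by
  have h_int₁ := integrable_gaussianWave hα z.1
  have h_int₂ := integrable_gaussianWave hβ (z.2 + σ * z.1)
  have h_fst := ((integrable_mul_gaussianWave hα z.1).mul_prod h_int₂).const_mul (k.1 : ℂ)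
  have h_snd := (h_int₁.mul_prod (integrable_mul_gaussianWave hβ (z.2 + σ * z.1))).const_mul
    ((k.2 + σ * k.1 : ℝ) : ℂ)
  have h_prod : π / √(α * β) * exp (-dualForm α β σ z / 4) =
      √(π / α) * exp (-(z.1 ^ 2 / (4 * α))) *
        (√(π / β) * exp (-((z.2 + σ * z.1) ^ 2 / (4 * β)))) := by
    rw [← sqrt_div_mul_sqrt_div hα, mul_mul_mul_comm, ← exp_add, dualForm]
    congr 2
    field_simp
    ring
  have hα' : (α : ℂ) ≠ 0 := Complex.ofReal_ne_zero.2 hα.ne'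
  have hβ' : (β : ℂ) ≠ 0 := Complex.ofReal_ne_zero.2 hβ.ne'
  rw [← (measurePreserving_shear σ).integral_comp (shear σ).measurableEmbedding]
  simp only [planePairing_mul_exp_mul_planeWave_shear]
  rw [Measure.volume_eq_prod, integral_add h_fst h_snd, integral_const_mul, integral_const_mul,
    integral_prod_mul (fun x : ℝ => x * gaussianWave α z.1 x),
    integral_prod_mul _ (fun y : ℝ => y * gaussianWave β (z.2 + σ * z.1) y),
    integral_mul_gaussianWave hα, integral_mul_gaussianWave hβ, integral_gaussianWave hα,
    integral_gaussianWave hβ, h_prod]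
  push_cast
  field_simp

lemma abs_dualForm_polar_le (hα : 0 < α) (hβ : 0 < β) (σ : ℝ) (k z : ℝ × ℝ) :
    |k.1 * z.1 / α + (k.2 + σ * k.1) * (z.2 + σ * z.1) / β| ≤
      √(dualForm α β σ k) * √(dualForm α β σ z) := by
  rw [← sqrt_mul (dualForm_nonneg hα hβ σ k)]
  refine abs_le_sqrt (sub_nonneg.1 ?_)
  have h_lagrange : dualForm α β σ k * dualForm α β σ z -
      (k.1 * z.1 / α + (k.2 + σ * k.1) * (z.2 + σ * z.1) / β) ^ 2 =
        (k.1 * (z.2 + σ * z.1) - (k.2 + σ * k.1) * z.1) ^ 2 / (α * β) := by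
    unfold dualForm
    field_simp
    ring
  rw [h_lagrange]
  positivity

lemma sqrt_mul_exp_neg_div_four_le (x : ℝ) :
    √x * exp (-x / 4) ≤ 2 * exp (-x / 8) := by
  have h_sqrt : √x ≤ 2 * exp (x / 8) := by
    refine sqrt_le_iff.2 ⟨by positivity, ?_⟩
    rw [mul_pow, ← exp_nat_mul]
    push_cast
    linarith [add_one_le_exp (2 * (x / 8))]
  calc √x * exp (-x / 4) ≤ 2 * exp (x / 8) * exp (-x / 4) := by gcongr
    _ = 2 * exp (-x / 8) := by
        rw [mul_assoc, ← exp_add]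
        ring_nf

lemma norm_integral_planePairing_mul_exp_neg_quadForm_mul_planeWave_le (hα : 0 < α) (hβ : 0 < β)
    (σ : ℝ) (k z : ℝ × ℝ) :
    ‖∫ w, (planePairing k w * exp (-quadForm α β σ w) : ℝ) * planeWave z w‖ ≤
      π / √(α * β) * √(dualForm α β σ k) * exp (-dualForm α β σ z / 8) := by
  rw [integral_planePairing_mul_exp_neg_quadForm_mul_planeWave hα hβ, norm_mul, norm_div,
    Complex.norm_I, Complex.norm_ofNat, Complex.norm_real, norm_eq_abs, abs_mul,
    abs_of_nonneg (by positivity : 0 ≤ π / √(α * β) * exp (-dualForm α β σ z / 4))]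
  calc 1 / 2 * (|k.1 * z.1 / α + (k.2 + σ * k.1) * (z.2 + σ * z.1) / β| *
        (π / √(α * β) * exp (-dualForm α β σ z / 4)))
      ≤ 1 / 2 * (√(dualForm α β σ k) * √(dualForm α β σ z) *
        (π / √(α * β) * exp (-dualForm α β σ z / 4))) := by
        gcongr
        exact abs_dualForm_polar_le hα hβ σ k z
    _ = 1 / 2 * (π / √(α * β) * √(dualForm α β σ k) *
        (√(dualForm α β σ z) * exp (-dualForm α β σ z / 4))) := by ring
    _ ≤ 1 / 2 * (π / √(α * β) * √(dualForm α β σ k) * (2 * exp (-dualForm α β σ z / 8))) := by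
        refine mul_le_mul_of_nonneg_left (mul_le_mul_of_nonneg_left ?_ (by positivity))
          (by norm_num)
        exact sqrt_mul_exp_neg_div_four_le (dualForm α β σ z)
    _ = π / √(α * β) * √(dualForm α β σ k) * exp (-dualForm α β σ z / 8) := by ring

lemma integral_norm_mul_exp_neg_dualForm_le (hα : 0 < α) (hβ : 0 < β) (σ : ℝ) {p : ℝ} (hp : 1 < p)
    {f : ℝ × ℝ → ℂ} (hf : MemLp f (.ofReal p)) (P : ℝ × ℝ) :
    ∫ x, ‖f x‖ * exp (-dualForm α β σ (P - x)) ≤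
      lpNorm f (.ofReal p) volume * (π * √(α * β)) ^ (1 - 1 / p) := by
  have hpr := HolderConjugate.conjExponent hp
  set r := p.conjExponent
  have hr_inv : 1 / r = 1 - 1 / p := by rw [one_div, one_div, hpr.one_sub_inv]
  have h_pow (z : ℝ × ℝ) :
      exp (-dualForm α β σ z) ^ r = exp (-dualForm (r⁻¹ * α) (r⁻¹ * β) σ z) := by
    rw [dualForm_mul_mul, inv_inv, ← exp_mul]
    ring_nf
  have h_int := integrable_exp_neg_dualForm (mul_pos (inv_pos.2 hpr.symm.pos) hα)
    (mul_pos (inv_pos.2 hpr.symm.pos) hβ) σ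
  have h_norm : ∫ x, exp (-dualForm α β σ (P - x)) ^ r ≤ π * √(α * β) := by
    simp only [h_pow]
    rw [integral_sub_left_eq_self fun z => exp (-dualForm (r⁻¹ * α) (r⁻¹ * β) σ z),
      integral_exp_neg_dualForm _ (mul_pos (inv_pos.2 hpr.symm.pos) hβ)]
    refine mul_le_mul_of_nonneg_left (sqrt_le_sqrt (mul_le_mul ?_ ?_
      (mul_nonneg (inv_nonneg.2 hpr.symm.nonneg) hβ.le) hα.le))
      pi_nonneg
    · exact mul_le_of_le_one_left hα.le (inv_le_one_of_one_le₀ hpr.symm.lt.le)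
    · exact mul_le_of_le_one_left hβ.le (inv_le_one_of_one_le₀ hpr.symm.lt.le)
  have h_memLp : MemLp (fun x => exp (-dualForm α β σ (P - x))) (.ofReal r) := by
    rw [← integrable_norm_rpow_iff (by fun_prop) (by simpa using hpr.symm.pos) (by simp)]
    simp only [norm_of_nonneg (exp_nonneg _), ENNReal.toReal_ofReal hpr.symm.nonneg, h_pow]
    exact h_int.comp_sub_left P
  calc ∫ x, ‖f x‖ * exp (-dualForm α β σ (P - x))
      ≤ (∫ x, ‖f x‖ ^ p) ^ (1 / p) * (∫ x, exp (-dualForm α β σ (P - x)) ^ r) ^ (1 / r) :=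
        integral_mul_le_Lp_mul_Lq_of_nonneg hpr (.of_forall fun x => norm_nonneg (f x))
          (.of_forall fun x => exp_nonneg _) hf.norm h_memLp
    _ = lpNorm f (.ofReal p) volume *
          (∫ x, exp (-dualForm α β σ (P - x)) ^ r) ^ (1 - 1 / p) := by
        rw [lpNorm_eq_integral_norm_rpow_toReal (by simpa using hpr.pos) (by simp)
          hf.aestronglyMeasurable, ENNReal.toReal_ofReal hpr.nonneg, hr_inv, one_div]
    _ ≤ lpNorm f (.ofReal p) volume * (π * √(α * β)) ^ (1 - 1 / p) := by
        have : 0 ≤ 1 - 1 / p := hr_inv ▸ one_div_nonneg.2 hpr.symm.nonneg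
        gcongr
        exact lpNorm_nonneg

lemma integral_norm_mul_exp_neg_dualForm_div_eight_le (hα : 0 < α) (hβ : 0 < β) (σ : ℝ) {p : ℝ}
    (hp : 1 < p) {f : ℝ × ℝ → ℂ} (hf : MemLp f (.ofReal p)) (P : ℝ × ℝ) :
    ∫ x, ‖f x‖ * exp (-dualForm α β σ (P - x) / 8) ≤
      lpNorm f (.ofReal p) volume * (8 * π * (√(α * β) * √(α * β) ^ (-(1 / p)))) := by
  have hα_scaled : 0 < 8 * α := by positivity
  have hβ_scaled : 0 < 8 * β := by positivity
  have hκ : 0 < √(α * β) := sqrt_pos.2 (mul_pos hα hβ)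
  have h_sqrt : √(8 * α * (8 * β)) = 8 * √(α * β) := by
    rw [mul_mul_mul_comm, sqrt_mul (by norm_num), sqrt_mul_self (by norm_num)]
  have h_dual (z : ℝ × ℝ) : -dualForm (8 * α) (8 * β) σ z = -dualForm α β σ z / 8 := by
    rw [dualForm_mul_mul]
    ring
  have h_holder := integral_norm_mul_exp_neg_dualForm_le hα_scaled hβ_scaled σ hp hf P
  simp only [h_sqrt, h_dual] at h_holder
  have h_rpow : (π * (8 * √(α * β))) ^ (1 - 1 / p) ≤
      8 * π * (√(α * β) * √(α * β) ^ (-(1 / p))) := by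
    rw [mul_left_comm, ← mul_assoc, mul_rpow (by positivity) hκ.le, sub_eq_add_neg (1 : ℝ),
      rpow_add hκ, rpow_one]
    gcongr
    refine rpow_le_self_of_one_le (by linarith [pi_gt_three]) ?_
    linarith [one_div_pos.2 (one_pos.trans hp)]
  have h_lpNorm : 0 ≤ lpNorm f (.ofReal p) volume := lpNorm_nonneg
  exact h_holder.trans (by gcongr)

theorem norm_integral_planePairing_mul_exp_neg_quadForm_mul_ft2_le (hα : 0 < α) (hβ : 0 < β)
    (σ : ℝ) {p : ℝ} (hp : 1 < p) (k : ℝ × ℝ) {f : ℝ × ℝ → ℂ} (hf : Integrable f)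
    (hfp : MemLp f (.ofReal p)) (P : ℝ × ℝ) :
    ‖∫ w, (planePairing k w * exp (-quadForm α β σ w) : ℝ) * ft2 f w.1 w.2 * planeWave P w‖ ≤
      8 * π ^ 2 * √(dualForm α β σ k) * lpNorm f (.ofReal p) volume * √(α * β) ^ (-(1 / p)) := by
  have : 0 < √(α * β) := sqrt_pos.2 (mul_pos hα hβ)
  have h_int : Integrable fun x => ‖f x‖ * exp (-dualForm α β σ (P - x) / 8) := by
    refine hf.norm.mul_bdd (c := 1) (by fun_prop) (.of_forall fun x => ?_)
    rw [norm_of_nonneg (exp_nonneg _), exp_le_one_iff]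
    linarith [dualForm_nonneg hα hβ σ (P - x)]
  have h_int_freq : Integrable fun w => ((planePairing k w * exp (-quadForm α β σ w) : ℝ) : ℂ) :=
    (integrable_planePairing_mul_exp_neg_quadForm hα hβ σ k).ofReal
  rw [integral_mul_ft2_mul_planeWave h_int_freq hf]
  calc ‖∫ x, f x * ∫ w, (planePairing k w * exp (-quadForm α β σ w) : ℝ) * planeWave (P - x) w‖
      ≤ ∫ x, π / √(α * β) * √(dualForm α β σ k) *
          (‖f x‖ * exp (-dualForm α β σ (P - x) / 8)) := by
        refine norm_integral_le_of_norm_le (h_int.const_mul _) (.of_forall fun x => ?_)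
        rw [norm_mul, mul_left_comm]
        gcongr
        exact norm_integral_planePairing_mul_exp_neg_quadForm_mul_planeWave_le hα hβ σ k (P - x)
    _ ≤ π / √(α * β) * √(dualForm α β σ k) *
          (lpNorm f (.ofReal p) volume * (8 * π * (√(α * β) * √(α * β) ^ (-(1 / p))))) := by
        rw [integral_const_mul]
        gcongr
        exact integral_norm_mul_exp_neg_dualForm_div_eight_le hα hβ σ hp hfp P
    _ = 8 * π ^ 2 * √(dualForm α β σ k) * lpNorm f (.ofReal p) volume *
          √(α * β) ^ (-(1 / p)) := by
        field_simp

/-- The directional derivative `∂ₖ Δ⁻¹ f` at `P`, where `-Δ` has Fourier symbol `quadForm α β σ`,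
as an inverse Fourier integral. -/
noncomputable def dirDerivInvLap (α β σ : ℝ) (k : ℝ × ℝ) (f : ℝ × ℝ → ℂ) (P : ℝ × ℝ) : ℂ :=
  ((2 * π) ^ (-2 : ℤ) : ℝ) * ∫ w,
    -I * planePairing k w / quadForm α β σ w * ft2 f w.1 w.2 * planeWave P w

lemma norm_integral_planePairing_mul_exp_neg_mul_quadForm_mul_ft2_le (hα : 0 < α) (hβ : 0 < β)
    (σ : ℝ) {p : ℝ} (hp : 1 < p) (k : ℝ × ℝ) {f : ℝ × ℝ → ℂ} (hf : Integrable f)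
    (hfp : MemLp f (.ofReal p)) (P : ℝ × ℝ) {s : ℝ} (hs : 0 < s) :
    ‖∫ w, (planePairing k w * exp (-(s * quadForm α β σ w)) : ℝ) * ft2 f w.1 w.2 *
        planeWave P w‖ ≤
      8 * π ^ 2 * √(dualForm α β σ k) * lpNorm f (.ofReal p) volume * √(α * β) ^ (-(1 / p)) *
        s ^ (-(1 / 2) - 1 / p) := by
  have h_heat := norm_integral_planePairing_mul_exp_neg_quadForm_mul_ft2_le (mul_pos hs hα)
    (mul_pos hs hβ) σ hp k hf hfp P
  simp only [quadForm_mul_mul, dualForm_mul_mul] at h_heat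
  refine h_heat.trans_eq ?_
  have h_sqrt_inv : √s⁻¹ = s ^ (-(1 / 2) : ℝ) := by rw [sqrt_inv, sqrt_eq_rpow, rpow_neg hs.le]
  rw [mul_mul_mul_comm, sqrt_mul (mul_self_nonneg s), sqrt_mul_self hs.le,
    mul_rpow hs.le (sqrt_nonneg _), sqrt_mul (inv_nonneg.2 hs.le), h_sqrt_inv,
    sub_eq_add_neg, rpow_add hs]
  ring

lemma integral_div_quadForm_mul_ft2_eq_integral_Ioi (hα : 0 < α) (hβ : 0 < β) (σ : ℝ)
    {k P : ℝ × ℝ} {f : ℝ × ℝ → ℂ} (h_int : Integrable fun w =>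
      -I * planePairing k w / quadForm α β σ w * ft2 f w.1 w.2 * planeWave P w) :
    ∫ w, -I * planePairing k w / quadForm α β σ w * ft2 f w.1 w.2 * planeWave P w =
      ∫ s in Ioi (0 : ℝ), -I * ∫ w,
        (planePairing k w * exp (-(s * quadForm α β σ w)) : ℝ) * ft2 f w.1 w.2 *
          planeWave P w := by
  have h_smul (w : ℝ × ℝ) :
      -I * planePairing k w / quadForm α β σ w * ft2 f w.1 w.2 * planeWave P w =
        (quadForm α β σ w)⁻¹ • (-I * planePairing k w * ft2 f w.1 w.2 * planeWave P w) := by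
    rw [Complex.real_smul, Complex.ofReal_inv]
    ring
  have h_pos : ∀ᵐ w, 0 < quadForm α β σ w := by
    filter_upwards [Measure.ae_ne volume 0] with w hw
    exact quadForm_pos hα hβ σ hw
  simp only [h_smul] at h_int ⊢
  rw [integral_inv_smul_eq_integral_Ioi_integral_exp_smul (by fun_prop) h_pos h_int]
  congr! 2
  rw [← integral_const_mul]
  congr! 2
  rw [Complex.real_smul, Complex.ofReal_mul]
  ring

lemma norm_integral_planePairing_div_quadForm_mul_ft2_le (hα : 0 < α) (hβ : 0 < β) (σ : ℝ)
    {p q δ : ℝ} (hp : 1 < p) (hq : 1 < q) (hδ : 0 < δ) (hpδ : 1 / p = 1 / 2 - δ)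
    (hqδ : 1 / q = 1 / 2 + δ) (k : ℝ × ℝ) {f : ℝ × ℝ → ℂ} (hf : Integrable f)
    (hfp : MemLp f (.ofReal p)) (hfq : MemLp f (.ofReal q)) (P : ℝ × ℝ) :
    ‖∫ w, -I * planePairing k w / quadForm α β σ w * ft2 f w.1 w.2 * planeWave P w‖ ≤
      2 / δ * (8 * π ^ 2 * √(dualForm α β σ k) * √(α * β) ^ (-(1 / 2) : ℝ) *
        √(lpNorm f (.ofReal p) volume * lpNorm f (.ofReal q) volume)) := by
  have hκ : 0 < √(α * β) := sqrt_pos.2 (mul_pos hα hβ)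
  -- A non-integrable integrand would have Bochner integral zero.
  by_cases h_int : Integrable fun w =>
    -I * planePairing k w / quadForm α β σ w * ft2 f w.1 w.2 * planeWave P w
  swap
  · rw [integral_undef h_int, norm_zero]
    positivity
  have h_rpow : √(α * β) ^ (-(1 / p)) * √(α * β) ^ (-(1 / q)) =
      (√(α * β) ^ (-(1 / 2) : ℝ)) ^ 2 := by
    rw [sq, ← rpow_add hκ, ← rpow_add hκ, hpδ, hqδ]
    ring_nf
  have h_geom_mean (c Np Nq : ℝ) (hc : 0 ≤ c) :
      √(c * Np * √(α * β) ^ (-(1 / p)) * (c * Nq * √(α * β) ^ (-(1 / q)))) =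
        c * √(α * β) ^ (-(1 / 2) : ℝ) * √(Np * Nq) := by
    rw [mul_mul_mul_comm, h_rpow, mul_mul_mul_comm, mul_right_comm, ← sq, ← mul_pow,
      sqrt_mul (sq_nonneg _), sqrt_sq (by positivity)]
  rw [integral_div_quadForm_mul_ft2_eq_integral_Ioi hα hβ σ h_int,
    ← h_geom_mean _ _ _ (by positivity)]
  refine norm_integral_Ioi_le_of_norm_le_rpow hδ (fun s hs => ?_) fun s hs => ?_ <;>
    rw [norm_mul, norm_neg, Complex.norm_I, one_mul]
  · refine (norm_integral_planePairing_mul_exp_neg_mul_quadForm_mul_ft2_le hα hβ σ hp k hf hfp P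
      hs).trans_eq ?_
    rw [hpδ]
    ring_nf
  · refine (norm_integral_planePairing_mul_exp_neg_mul_quadForm_mul_ft2_le hα hβ σ hq k hf hfq P
      hs).trans_eq ?_
    rw [hqδ]
    ring_nf

theorem norm_dirDerivInvLap_le (hα : 0 < α) (hβ : 0 < β) (σ : ℝ) {p q δ : ℝ} (hp : 1 < p)
    (hq : 1 < q) (hδ : 0 < δ) (hpδ : 1 / p = 1 / 2 - δ) (hqδ : 1 / q = 1 / 2 + δ) (k : ℝ × ℝ)
    {f : ℝ × ℝ → ℂ} (hf : Integrable f) (hfp : MemLp f (.ofReal p)) (hfq : MemLp f (.ofReal q))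
    (P : ℝ × ℝ) :
    ‖dirDerivInvLap α β σ k f P‖ ≤ 4 / δ * √(dualForm α β σ k) * √(α * β) ^ (-(1 / 2) : ℝ) *
      √(lpNorm f (.ofReal p) volume * lpNorm f (.ofReal q) volume) := by
  rw [dirDerivInvLap, norm_mul, Complex.norm_real, norm_of_nonneg (by positivity)]
  calc (2 * π) ^ (-2 : ℤ) * _ ≤ _ := mul_le_mul_of_nonneg_left
        (norm_integral_planePairing_div_quadForm_mul_ft2_le hα hβ σ hp hq hδ hpδ hqδ k hf hfp hfq P)
        (by positivity)
    _ = _ := by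
      field_simp
      ring

end QuadForm

section AnisotropicLaplacian

open Real

variable {m : ℝ}

/-- The quadratic form dual to `qsym t`, which is a `quadForm`. -/
noncomputable def qsymDual (t : ℝ) : ℝ × ℝ → ℝ :=
  dualForm (1 + t ^ 2 / 3)⁻¹ ((1 + t ^ 2 / 3) * (1 + t ^ 2 / 12)⁻¹)
    (t / 2 * (1 + t ^ 2 / 12) ^ (-(1 : ℝ) / 2))

/-- The directional derivative `∂ₖ Δ_t⁻¹ f`, where `-Δ_t` has Fourier symbol `qsym t`. -/
noncomputable def dirDerivInvLapQsym (t : ℝ) : ℝ × ℝ → (ℝ × ℝ → ℂ) → ℝ × ℝ → ℂ :=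
  dirDerivInvLap (1 + t ^ 2 / 3)⁻¹ ((1 + t ^ 2 / 3) * (1 + t ^ 2 / 12)⁻¹)
    (t / 2 * (1 + t ^ 2 / 12) ^ (-(1 : ℝ) / 2))

lemma dxInvLap_eq_dirDerivInvLapQsym (t : ℝ) (f : ℝ × ℝ → ℂ) :
    dxInvLap t f = dirDerivInvLapQsym t (1, 0) f := by
  funext P
  simp only [dirDerivInvLapQsym, dirDerivInvLap, planePairing, one_mul, zero_mul, add_zero]
  rfl

lemma dyInvLap_eq_dirDerivInvLapQsym (t : ℝ) (f : ℝ × ℝ → ℂ) :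
    dyInvLap t f = dirDerivInvLapQsym t (0, 1) f := by
  funext P
  simp only [dirDerivInvLapQsym, dirDerivInvLap, planePairing, one_mul, zero_mul, zero_add]
  rfl

lemma qsymDual_one_zero_le (t : ℝ) : qsymDual t (1, 0) ≤ 1 + t ^ 2 := by
  have h_rpow : ((1 + t ^ 2 / 12) ^ (-(1 : ℝ) / 2)) ^ 2 = (1 + t ^ 2 / 12)⁻¹ := by
    rw [← rpow_natCast, ← rpow_mul (by positivity)]
    norm_num [rpow_neg_one]
  calc qsymDual t (1, 0) = 1 + t ^ 2 / 3 + t ^ 2 / 4 / (1 + t ^ 2 / 3) := by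
        simp only [qsymDual, dualForm, mul_one, zero_add, mul_pow, h_rpow]
        field_simp
        ring
    _ ≤ 1 + t ^ 2 / 3 + t ^ 2 / 4 := by
        refine add_le_add_right (div_le_self (by positivity) ?_) _
        linarith [sq_nonneg t]
    _ ≤ 1 + t ^ 2 := by linarith [sq_nonneg t]

lemma qsymDual_zero_one_le (t : ℝ) : qsymDual t (0, 1) ≤ 1 := by
  simp only [qsymDual, dualForm, mul_zero, add_zero, one_pow, zero_pow two_ne_zero,
    zero_div, zero_add]
  rw [← div_eq_mul_inv, one_div_div]
  exact (div_le_one (by positivity)).2 (by linarith [sq_nonneg t])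

lemma sqrt_det_qsym_rpow_le (t : ℝ) :
    √((1 + t ^ 2 / 3)⁻¹ * ((1 + t ^ 2 / 3) * (1 + t ^ 2 / 12)⁻¹)) ^ (-(1 / 2) : ℝ) ≤
      √(1 + t ^ 2) ^ (1 / 2 : ℝ) := by
  rw [inv_mul_cancel_left₀ (by positivity), sqrt_inv, inv_rpow (sqrt_nonneg _),
    ← rpow_neg (sqrt_nonneg _), neg_neg]
  gcongr
  linarith [sq_nonneg t]

lemma eLpNorm_top_dirDerivInvLapQsym_le (hm : 1 < m) (t : ℝ) {k : ℝ × ℝ} {c : ℝ}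
    (hk : √(qsymDual t k) ≤ c) (f : 𝓢(ℝ × ℝ, ℂ)) :
    eLpNorm (dirDerivInvLapQsym t k f) ⊤ ≤
      .ofReal (8 * m * (c * √(1 + t ^ 2) ^ (1 / 2 : ℝ)) *
        √(lpNorm f (.ofReal (2 * m / (m - 1))) volume *
          lpNorm f (.ofReal (2 * m / (m + 1))) volume)) := by
  have hm_sub : 0 < m - 1 := sub_pos.2 hm
  have : 0 < m := one_pos.trans hm
  rw [eLpNorm_exponent_top]
  refine eLpNormEssSup_le_of_ae_bound (.of_forall fun P => ?_)
  refine (norm_dirDerivInvLap_le (by positivity) (by positivity) _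
    (p := 2 * m / (m - 1)) (q := 2 * m / (m + 1)) (δ := 1 / (2 * m))
    ((one_lt_div hm_sub).2 (by linarith)) ((one_lt_div (by positivity)).2 (by linarith))
    (by positivity) (by field_simp) (by field_simp) k f.integrable (f.memLp _) (f.memLp _)
    P).trans ?_
  rw [show 4 / (1 / (2 * m)) = 8 * m by field_simp; norm_num, mul_assoc (8 * m)]
  have hc : 0 ≤ c := (sqrt_nonneg _).trans hk
  gcongr 8 * m * (?_ * ?_) * _
  exacts [hk, sqrt_det_qsym_rpow_le t]

theorem stmt_9_general (hm : 1 < m) (t : ℝ) (f : 𝓢(ℝ × ℝ, ℂ)) :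
    eLpNorm (dxInvLap t f) ⊤ + ENNReal.ofReal √(1 + t ^ 2) * eLpNorm (dyInvLap t f) ⊤ ≤
      ENNReal.ofReal (16 * m * √(1 + t ^ 2) ^ (3 / 2 : ℝ)) *
        eLpNorm f (ENNReal.ofReal (2 * m / (m - 1))) ^ (1 / 2 : ℝ) *
        eLpNorm f (ENNReal.ofReal (2 * m / (m + 1))) ^ (1 / 2 : ℝ) := by
  have h_dx := eLpNorm_top_dirDerivInvLapQsym_le hm t (sqrt_le_sqrt (qsymDual_one_zero_le t)) f
  have h_dy := eLpNorm_top_dirDerivInvLapQsym_le hm t (sqrt_le_one.2 (qsymDual_zero_one_le t)) f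
  rw [← dxInvLap_eq_dirDerivInvLapQsym] at h_dx
  rw [← dyInvLap_eq_dirDerivInvLapQsym] at h_dy
  have h_rpow : √(1 + t ^ 2) ^ (3 / 2 : ℝ) = √(1 + t ^ 2) * √(1 + t ^ 2) ^ (1 / 2 : ℝ) := by
    rw [← rpow_one_add' (sqrt_nonneg _) (by norm_num)]
    norm_num
  have : 0 < m := one_pos.trans hm
  rw [mul_assoc, ← ofReal_sqrt_lpNorm_mul_lpNorm (f.memLp _ volume) (f.memLp _ volume),
    ← ENNReal.ofReal_mul (by positivity), h_rpow]
  refine (add_le_add h_dx (mul_le_mul_right h_dy _)).trans_eq ?_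
  rw [← ENNReal.ofReal_mul (sqrt_nonneg _), ← ENNReal.ofReal_add (by positivity) (by positivity)]
  ring_nf

end AnisotropicLaplacian

/-- Lemma 3.1 (first part): for `m > 1` there is `C = C(m) > 0` such that for all `t > 2` and
Schwartz `Ω`, `‖∂_X Δ_t⁻¹ Ω‖_{L^∞} + ⟨t⟩ ‖∂_Y Δ_t⁻¹ Ω‖_{L^∞} ≤
C ⟨t⟩^{3/2} ‖Ω‖_{L^{2m/(m-1)}}^{1/2} ‖Ω‖_{L^{2m/(m+1)}}^{1/2}`. -/
theorem stmt_9 (m : ℝ) (hm : 1 < m) :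
    ∃ C : ℝ, 0 < C ∧
      ∀ t : ℝ, 2 < t →
        ∀ Ω : 𝓢(ℝ × ℝ, ℝ),
          eLpNorm (dxInvLap t (fun p => (Ω p : ℂ))) ⊤ +
              ENNReal.ofReal (Real.sqrt (1 + t ^ 2)) *
                eLpNorm (dyInvLap t (fun p => (Ω p : ℂ))) ⊤ ≤
            ENNReal.ofReal (C * Real.sqrt (1 + t ^ 2) ^ ((3 : ℝ) / 2)) *
              eLpNorm (fun p => Ω p) (ENNReal.ofReal (2 * m / (m - 1))) ^ ((1 : ℝ) / 2) *
              eLpNorm (fun p => Ω p) (ENNReal.ofReal (2 * m / (m + 1))) ^ ((1 : ℝ) / 2) := by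
  refine ⟨16 * m, by positivity, fun t _ Ω => ?_⟩
  have h_norm (r : ℝ≥0∞) : eLpNorm (fun p => (Ω p : ℂ)) r = eLpNorm (fun p => Ω p) r :=
    eLpNorm_congr_norm_ae (.of_forall fun p => Complex.norm_real (Ω p))
  rw [← h_norm, ← h_norm]
  exact stmt_9_general hm t (Ω.postcompCLM Complex.ofRealCLM)
end

section
/- Let 0<σ<1/2. There is a constant C = C(σ) > 0 such that for every t>0 and every Schwartz function f on ℝ², ‖∂_X Δ_t^{-1} f‖_{L^∞(ℝ²)} + ⟨t⟩ ‖∂_Y Δ_t^{-1} f‖_{L^∞(ℝ²)} ≤ C ⟨t⟩^{1+σ} ‖f‖_{L²(1)}^{1/2+σ} ‖∂_X f‖_{L²(1)}^{1/2−σ}. -/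
open MeasureTheory SchwartzMap
open scoped ENNReal

/-- The weighted norm `‖f‖_{L²(m)} = ‖⟨X,Y⟩^m f‖_{L²(ℝ²)}`, `⟨X,Y⟩ = (1+X²+Y²)^{1/2}`. -/
noncomputable def wnorm {E : Type*} [NormedAddCommGroup E] (m : ℝ) (f : ℝ × ℝ → E) : ℝ≥0∞ :=
  eLpNorm (fun p => (1 + p.1 ^ 2 + p.2 ^ 2) ^ (m / 2) * ‖f p‖) 2

/-- The partial derivative `∂_X f`. -/
noncomputable def pderivX (f : ℝ × ℝ → ℝ) : ℝ × ℝ → ℝ :=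
  fun p => deriv (fun x => f (x, p.2)) p.1

/-!
The symbol satisfies `η² ≤ q_t` and `ξ² ≤ ⟨t⟩² q_t`, so `|ξ|^α |η|^(2-α) ≤ ⟨t⟩^α q_t` for
`0 ≤ α ≤ 2`. Taking `α = 1 + σ` and `α = σ` bounds both `|ξ| / q_t` and `⟨t⟩ |η| / q_t` by
`⟨t⟩^(1+σ) |ξ|^(-σ) |η|^(σ-1)`, and it remains to integrate `|f̂|` against this product weight.
For fixed `η`, splitting the `ξ`-integral at an optimal height interpolates between `f̂` and
`ξ f̂ = -i (∂_X f)^` in `L²_ξ`; Hölder's inequality in `η` keeps the same exponents. Finally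
`∫ |η|^(σ-1) ‖f̂(·, η)‖_{L²_ξ} dη ≲ ‖f‖_{L²(1)}`: near `η = 0` the weight `⟨X,Y⟩` bounds
`‖f̂(·, η)‖_{L²_ξ}` uniformly in `η`, and for large `η` Plancherel's theorem and Cauchy–Schwarz
suffice since `σ < 1/2`.
-/

open FourierTransform

section SquareIntegrals

variable {α : Type*} [MeasurableSpace α] {μ : Measure α}

lemma eLpNorm_two_sq {ε : Type*} [ENorm ε] (f : α → ε) :
    eLpNorm f 2 μ ^ 2 = ∫⁻ x, ‖f x‖ₑ ^ 2 ∂μ := by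
  simpa using eLpNorm_nnreal_pow_eq_lintegral (f := f) (μ := μ) (p := 2) two_ne_zero

lemma lintegral_mul_le_eLpNorm_two_mul_eLpNorm_two {f g : α → ℝ≥0∞} (hf : AEMeasurable f μ)
    (hg : AEMeasurable g μ) : ∫⁻ x, f x * g x ∂μ ≤ eLpNorm f 2 μ * eLpNorm g 2 μ := by
  simpa [eLpNorm_eq_lintegral_rpow_enorm_toReal] using
    ENNReal.lintegral_mul_le_Lp_mul_Lq μ Real.HolderConjugate.two_two hf hg

lemma lintegral_sq_le_pi_mul_lintegral_one_add_sq_mul_sq {u : ℝ → ℝ≥0∞} (hu : AEMeasurable u) :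
    (∫⁻ y, u y) ^ 2 ≤
      ENNReal.ofReal Real.pi * ∫⁻ y, ENNReal.ofReal (1 + y ^ 2) * u y ^ 2 := by
  let a : ℝ → ℝ≥0∞ := fun y => ENNReal.ofReal √((1 + y ^ 2)⁻¹)
  let b : ℝ → ℝ≥0∞ := fun y => ENNReal.ofReal √(1 + y ^ 2)
  have hab (y : ℝ) : a y * b y = 1 := by
    rw [← ENNReal.ofReal_mul (by positivity), ← Real.sqrt_mul (by positivity),
      inv_mul_cancel₀ (by positivity), Real.sqrt_one, ENNReal.ofReal_one]
  have ha : eLpNorm a 2 ^ 2 = ENNReal.ofReal Real.pi := by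
    rw [← integral_univ_inv_one_add_sq, ofReal_integral_eq_lintegral_ofReal
      integrable_inv_one_add_sq (.of_forall fun y => by positivity), eLpNorm_two_sq]
    refine lintegral_congr fun y => ?_
    rw [enorm_eq_self, ← ENNReal.ofReal_pow (by positivity), Real.sq_sqrt (by positivity)]
  have hbu : eLpNorm (fun y => b y * u y) 2 ^ 2 =
      ∫⁻ y, ENNReal.ofReal (1 + y ^ 2) * u y ^ 2 := by
    rw [eLpNorm_two_sq]
    refine lintegral_congr fun y => ?_
    rw [enorm_eq_self, mul_pow, ← ENNReal.ofReal_pow (by positivity),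
      Real.sq_sqrt (by positivity)]
  calc (∫⁻ y, u y) ^ 2 = (∫⁻ y, a y * (b y * u y)) ^ 2 := by
        simp only [← mul_assoc, hab, one_mul]
    _ ≤ (eLpNorm a 2 * eLpNorm (fun y => b y * u y) 2) ^ 2 := by
        gcongr
        exact lintegral_mul_le_eLpNorm_two_mul_eLpNorm_two (by fun_prop) (by fun_prop)
    _ = _ := by rw [mul_pow, ha, hbu]

end SquareIntegrals

section Plancherel

variable {V F : Type*} [NormedAddCommGroup V] [InnerProductSpace ℝ V] [FiniteDimensional ℝ V]
  [MeasurableSpace V] [BorelSpace V] [NormedAddCommGroup F] [InnerProductSpace ℂ F]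
  [CompleteSpace F] {g : V → F}

/- Both sides define the same tempered distribution: move the Fourier transform onto the test
function. -/
lemma fourier_toLp_ae_eq_fourier (hg₁ : Integrable g) (hg₂ : MemLp g 2) :
    (𝓕 (hg₂.toLp g) : Lp F 2 (volume : Measure V)) =ᵐ[volume] 𝓕 g := by
  have hcont : Continuous (𝓕 g) :=
    VectorFourier.fourierIntegral_continuous Real.continuous_fourierChar continuous_inner hg₁
  refine ae_eq_of_integral_contDiff_smul_eq ((Lp.memLp _).locallyIntegrable (by norm_num))
    hcont.locallyIntegrable fun φ hφ hφ_supp => ?_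
  have hφ_supp' : HasCompactSupport fun x => (φ x : ℂ) :=
    hφ_supp.comp_left (g := Complex.ofReal) Complex.ofReal_zero
  let ψ : 𝓢(V, ℂ) := hφ_supp'.toSchwartzMap (Complex.ofRealCLM.contDiff.comp hφ)
  have hψ (x : V) (v : F) : ψ x • v = φ x • v := Complex.coe_smul (φ x) v
  have hdistr : ∫ x, ψ x • (𝓕 (hg₂.toLp g) : Lp F 2 (volume : Measure V)) x =
      ∫ x, 𝓕 ψ x • hg₂.toLp g x := by
    simpa only [TemperedDistribution.fourier_apply, Lp.toTemperedDistribution_apply] using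
      (congrArg (fun T : 𝓢'(V, F) => T ψ)
        (Lp.fourier_toTemperedDistribution_eq (hg₂.toLp g))).symm
  have hswap : ∫ x, 𝓕 ψ x • g x = ∫ x, ψ x • 𝓕 g x := by
    have h := VectorFourier.integral_fourierIntegral_smul_eq_flip
      (L := innerₗ V) Real.continuous_fourierChar continuous_inner (ψ.integrable (μ := volume)) hg₁
    rwa [flip_innerₗ] at h
  have htoLp : ∫ x, 𝓕 ψ x • hg₂.toLp g x = ∫ x, 𝓕 ψ x • g x :=
    integral_congr_ae (hg₂.coeFn_toLp.mono fun x hx => congrArg (𝓕 ψ x • ·) hx)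
  simpa only [hψ] using hdistr.trans (htoLp.trans hswap)

lemma eLpNorm_fourier_eq (hg₁ : Integrable g) (hg₂ : MemLp g 2) :
    eLpNorm (𝓕 g) 2 = eLpNorm g 2 := by
  have h : ‖(𝓕 (hg₂.toLp g) : Lp F 2 (volume : Measure V))‖ₑ = ‖hg₂.toLp g‖ₑ := by
    rw [← ofReal_norm, ← ofReal_norm, Lp.norm_fourier_eq]
  rwa [Lp.enorm_def, Lp.enorm_def, eLpNorm_congr_ae hg₂.coeFn_toLp,
    eLpNorm_congr_ae (fourier_toLp_ae_eq_fourier hg₁ hg₂)] at h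

lemma lintegral_enorm_sq_fourier_le (hg : Integrable g) :
    ∫⁻ ξ, ‖𝓕 g ξ‖ₑ ^ 2 ≤ ∫⁻ x, ‖g x‖ₑ ^ 2 := by
  rw [← eLpNorm_two_sq, ← eLpNorm_two_sq]
  gcongr
  rcases eq_or_ne (eLpNorm g 2) ⊤ with htop | hfin
  · exact htop ▸ le_top
  · exact (eLpNorm_fourier_eq hg ⟨hg.1, hfin.lt_top⟩).le

end Plancherel

lemma lintegral_comp_mul_left {c : ℝ} (hc : c ≠ 0) (u : ℝ → ℝ≥0∞) :
    ∫⁻ x, u (c * x) = ENNReal.ofReal |c⁻¹| * ∫⁻ x, u x := by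
  rw [← (measurableEmbedding_mulLeft₀ hc).lintegral_map, Real.map_volume_mul_left hc,
    lintegral_smul_measure, smul_eq_mul]

section FourierTransformOnPlane

variable {F : ℝ × ℝ → ℂ}

lemma norm_exp_neg_I_mul_ofReal (a : ℝ) : ‖Complex.exp (-Complex.I * a)‖ = 1 := by
  simp [Complex.norm_exp]

lemma integrable_mul_exp_neg_I (hF : Integrable F) (ξ η : ℝ) :
    Integrable fun p : ℝ × ℝ =>
      F p * Complex.exp (-Complex.I * ((p.1 * ξ + p.2 * η : ℝ) : ℂ)) :=
  hF.mul_bdd (by fun_prop) (.of_forall fun p => (norm_exp_neg_I_mul_ofReal _).le)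

lemma continuous_ft2 (hF : Integrable F) : Continuous fun w : ℝ × ℝ => ft2 F w.1 w.2 := by
  refine continuous_of_dominated (bound := fun p => ‖F p‖)
    (fun w => (integrable_mul_exp_neg_I hF w.1 w.2).1)
    (fun w => .of_forall fun p => ?_) hF.norm (.of_forall fun p => by fun_prop)
  rw [norm_mul, norm_exp_neg_I_mul_ofReal, mul_one]

lemma fourier_two_pi_inv_mul (g : ℝ → ℂ) (ξ : ℝ) :
    𝓕 g ((2 * Real.pi)⁻¹ * ξ) = ∫ x, g x * Complex.exp (-Complex.I * ((x * ξ : ℝ) : ℂ)) := by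
  rw [Real.fourier_real_eq_integral_exp_smul]
  refine integral_congr_ae (.of_forall fun x => ?_)
  simp only [smul_eq_mul]
  rw [mul_comm]
  congr 2
  push_cast
  field_simp [Complex.ofReal_ne_zero.2 Real.pi_ne_zero]

lemma ft2_eq_fourier_fourier (hF : Integrable F) (ξ η : ℝ) :
    ft2 F ξ η =
      𝓕 (fun x => 𝓕 (fun y => F (x, y)) ((2 * Real.pi)⁻¹ * η)) ((2 * Real.pi)⁻¹ * ξ) := by
  simp only [fourier_two_pi_inv_mul]
  rw [ft2, Measure.volume_eq_prod, integral_prod _ (integrable_mul_exp_neg_I hF ξ η)]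
  refine integral_congr_ae (.of_forall fun x => ?_)
  simp only
  rw [← integral_mul_const]
  refine integral_congr_ae (.of_forall fun y => ?_)
  simp only
  rw [mul_assoc, ← Complex.exp_add]
  push_cast
  ring_nf

lemma aestronglyMeasurable_fourier_slice (hF : Integrable F) :
    AEStronglyMeasurable (fun w : ℝ × ℝ => 𝓕 (fun y => F (w.1, y)) ((2 * Real.pi)⁻¹ * w.2)) := by
  simp only [fourier_two_pi_inv_mul]
  refine AEStronglyMeasurable.integral_prod_right' (f := fun z : (ℝ × ℝ) × ℝ =>
    F (z.1.1, z.2) * Complex.exp (-Complex.I * ((z.2 * z.1.2 : ℝ) : ℂ))) ?_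
  have hproj : Measure.QuasiMeasurePreserving (fun z : (ℝ × ℝ) × ℝ => (z.1.1, z.2))
      (volume.prod volume) volume :=
    QuasiMeasurePreserving.prodMap Measure.quasiMeasurePreserving_fst (.id volume)
  exact (hF.1.comp_quasiMeasurePreserving hproj).mul (by fun_prop)

lemma enorm_fourier_le_lintegral_enorm (g : ℝ → ℂ) (ζ : ℝ) : ‖𝓕 g ζ‖ₑ ≤ ∫⁻ y, ‖g y‖ₑ := by
  rw [Real.fourier_real_eq]
  refine (enorm_integral_le_lintegral_enorm _).trans_eq (lintegral_congr fun y => ?_)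
  rw [← ofReal_norm, Circle.norm_smul, ofReal_norm]

lemma integrable_fourier_slice (hF : Integrable F) (η : ℝ) :
    Integrable fun x => 𝓕 (fun y => F (x, y)) ((2 * Real.pi)⁻¹ * η) := by
  have hmeas : AEStronglyMeasurable fun x => 𝓕 (fun y => F (x, y)) ((2 * Real.pi)⁻¹ * η) := by
    simp only [fourier_two_pi_inv_mul]
    refine AEStronglyMeasurable.integral_prod_right' (f := fun z : ℝ × ℝ =>
      F z * Complex.exp (-Complex.I * ((z.2 * η : ℝ) : ℂ))) ?_
    exact hF.1.mul (by fun_prop)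
  refine (Integrable.integral_norm_prod_left hF).mono' hmeas (.of_forall fun x => ?_)
  exact VectorFourier.norm_fourierIntegral_le_integral_norm _ _ _ _ _

lemma lintegral_enorm_ft2_sq_le (hF : Integrable F) (η : ℝ) :
    ∫⁻ ξ, ‖ft2 F ξ η‖ₑ ^ 2 ≤ ENNReal.ofReal (2 * Real.pi) *
      ∫⁻ x, ‖𝓕 (fun y => F (x, y)) ((2 * Real.pi)⁻¹ * η)‖ₑ ^ 2 := by
  have hscale := lintegral_comp_mul_left (c := (2 * Real.pi)⁻¹) (by positivity)
    fun ξ => ‖𝓕 (fun x => 𝓕 (fun y => F (x, y)) ((2 * Real.pi)⁻¹ * η)) ξ‖ₑ ^ 2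
  rw [inv_inv, abs_of_pos Real.two_pi_pos] at hscale
  simp only [ft2_eq_fourier_fourier hF, hscale]
  exact mul_le_mul_right (lintegral_enorm_sq_fourier_le (integrable_fourier_slice hF η)) _

end FourierTransformOnPlane

section WeightedNorm

lemma wnorm_one_sq {E : Type*} [NormedAddCommGroup E] (F : ℝ × ℝ → E) :
    wnorm 1 F ^ 2 = ∫⁻ p : ℝ × ℝ, ENNReal.ofReal (1 + p.1 ^ 2 + p.2 ^ 2) * ‖F p‖ₑ ^ 2 := by
  rw [wnorm, eLpNorm_two_sq]
  refine lintegral_congr fun p => ?_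
  have hp : 0 ≤ 1 + p.1 ^ 2 + p.2 ^ 2 := by positivity
  rw [← Real.sqrt_eq_rpow, enorm_mul, enorm_norm, mul_pow,
    Real.enorm_of_nonneg (Real.sqrt_nonneg _),
    ← ENNReal.ofReal_pow (Real.sqrt_nonneg _), Real.sq_sqrt hp]

variable {F : ℝ × ℝ → ℂ}

lemma eLpNorm_ft2_slice_le_wnorm (hF : Integrable F) (η : ℝ) :
    eLpNorm (fun ξ => ft2 F ξ η) 2 ≤ ENNReal.ofReal (2 * Real.pi) * wnorm 1 F := by
  have hslice : ∀ᵐ x : ℝ, ‖𝓕 (fun y => F (x, y)) ((2 * Real.pi)⁻¹ * η)‖ₑ ^ 2 ≤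
      ENNReal.ofReal Real.pi * ∫⁻ y, ENNReal.ofReal (1 + y ^ 2) * ‖F (x, y)‖ₑ ^ 2 := by
    filter_upwards [hF.1.prodMk_left] with x hx
    refine le_trans ?_ (lintegral_sq_le_pi_mul_lintegral_one_add_sq_mul_sq hx.enorm)
    gcongr
    exact enorm_fourier_le_lintegral_enorm _ _
  have hweighted : AEMeasurable fun p : ℝ × ℝ => ENNReal.ofReal (1 + p.2 ^ 2) * ‖F p‖ₑ ^ 2 :=
    AEMeasurable.mul (by fun_prop) (hF.1.enorm.pow_const 2)
  rw [← ENNReal.pow_le_pow_left_iff two_ne_zero, eLpNorm_two_sq, mul_pow, wnorm_one_sq]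
  calc ∫⁻ ξ, ‖ft2 F ξ η‖ₑ ^ 2
      ≤ ENNReal.ofReal (2 * Real.pi) *
          ∫⁻ x, ‖𝓕 (fun y => F (x, y)) ((2 * Real.pi)⁻¹ * η)‖ₑ ^ 2 :=
        lintegral_enorm_ft2_sq_le hF η
    _ ≤ ENNReal.ofReal (2 * Real.pi) * ∫⁻ x, ENNReal.ofReal Real.pi *
          ∫⁻ y, ENNReal.ofReal (1 + y ^ 2) * ‖F (x, y)‖ₑ ^ 2 :=
        mul_le_mul_right (lintegral_mono_ae hslice) _
    _ = ENNReal.ofReal (2 * Real.pi) * ENNReal.ofReal Real.pi *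
          ∫⁻ p : ℝ × ℝ, ENNReal.ofReal (1 + p.2 ^ 2) * ‖F p‖ₑ ^ 2 := by
        rw [lintegral_const_mul' _ _ ENNReal.ofReal_ne_top, mul_assoc, Measure.volume_eq_prod,
          lintegral_prod _ hweighted]
    _ ≤ _ := by
        rw [sq]
        gcongr with p
        · linarith [Real.pi_pos]
        · nlinarith [sq_nonneg p.1]

lemma lintegral_lintegral_enorm_ft2_sq_le (hF : Integrable F) :
    ∫⁻ η, ∫⁻ ξ, ‖ft2 F ξ η‖ₑ ^ 2 ≤ ENNReal.ofReal (2 * Real.pi) ^ 2 * ∫⁻ p, ‖F p‖ₑ ^ 2 := by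
  have hslice : ∀ᵐ x : ℝ, ∫⁻ η, ‖𝓕 (fun y => F (x, y)) ((2 * Real.pi)⁻¹ * η)‖ₑ ^ 2 ≤
      ENNReal.ofReal (2 * Real.pi) * ∫⁻ y, ‖F (x, y)‖ₑ ^ 2 := by
    filter_upwards [hF.prod_right_ae] with x hx
    rw [lintegral_comp_mul_left (by positivity) fun η => ‖𝓕 (fun y => F (x, y)) η‖ₑ ^ 2, inv_inv,
      abs_of_pos Real.two_pi_pos]
    exact mul_le_mul_right (lintegral_enorm_sq_fourier_le hx) _
  calc ∫⁻ η, ∫⁻ ξ, ‖ft2 F ξ η‖ₑ ^ 2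
      ≤ ∫⁻ η, ENNReal.ofReal (2 * Real.pi) *
          ∫⁻ x, ‖𝓕 (fun y => F (x, y)) ((2 * Real.pi)⁻¹ * η)‖ₑ ^ 2 :=
        lintegral_mono fun η => lintegral_enorm_ft2_sq_le hF η
    _ = ENNReal.ofReal (2 * Real.pi) *
          ∫⁻ x, ∫⁻ η, ‖𝓕 (fun y => F (x, y)) ((2 * Real.pi)⁻¹ * η)‖ₑ ^ 2 := by
        rw [lintegral_const_mul' _ _ ENNReal.ofReal_ne_top, ← lintegral_lintegral_swap
          ((aestronglyMeasurable_fourier_slice hF).enorm.pow_const 2)]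
    _ ≤ ENNReal.ofReal (2 * Real.pi) *
          ∫⁻ x, ENNReal.ofReal (2 * Real.pi) * ∫⁻ y, ‖F (x, y)‖ₑ ^ 2 :=
        mul_le_mul_right (lintegral_mono_ae hslice) _
    _ = _ := by
        rw [lintegral_const_mul' _ _ ENNReal.ofReal_ne_top, ← mul_assoc, ← sq,
          Measure.volume_eq_prod, lintegral_prod _ (hF.1.enorm.pow_const 2)]

lemma eLpNorm_eLpNorm_ft2_le_wnorm (hF : Integrable F) :
    eLpNorm (fun η => eLpNorm (fun ξ => ft2 F ξ η) 2) 2 ≤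
      ENNReal.ofReal (2 * Real.pi) * wnorm 1 F := by
  rw [← ENNReal.pow_le_pow_left_iff two_ne_zero, eLpNorm_two_sq, mul_pow, wnorm_one_sq]
  simp only [enorm_eq_self, eLpNorm_two_sq]
  refine (lintegral_lintegral_enorm_ft2_sq_le hF).trans ?_
  gcongr with p
  refine le_mul_of_one_le_left' (ENNReal.one_le_ofReal.2 ?_)
  nlinarith [sq_nonneg p.1, sq_nonneg p.2]

lemma measurable_eLpNorm_ft2_slice (hF : Integrable F) :
    Measurable fun η => eLpNorm (fun ξ => ft2 F ξ η) 2 := by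
  have hmeas : Measurable fun w : ℝ × ℝ => ‖ft2 F w.1 w.2‖ₑ ^ 2 :=
    (continuous_ft2 hF).enorm.measurable.pow_const 2
  simpa [eLpNorm_eq_lintegral_rpow_enorm_toReal] using
    hmeas.lintegral_prod_left'.pow_const (2 : ℝ)⁻¹

end WeightedNorm

section PartialDerivative

variable {f f' : ℝ × ℝ → ℂ}

lemma integral_eq_zero_of_hasDerivAt_fst (hf : Integrable f) (hf' : Integrable f')
    (hderiv : ∀ x y, HasDerivAt (fun x => f (x, y)) (f' (x, y)) x) : ∫ p, f' p = 0 := by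
  rw [Measure.volume_eq_prod, integral_prod_symm _ hf']
  refine integral_eq_zero_of_ae ?_
  filter_upwards [hf.prod_left_ae, hf'.prod_left_ae] with y hy hy'
  exact integral_eq_zero_of_hasDerivAt_of_integrable (fun x => hderiv x y) hy' hy

lemma ft2_of_hasDerivAt_fst (hf : Integrable f) (hf' : Integrable f')
    (hderiv : ∀ x y, HasDerivAt (fun x => f (x, y)) (f' (x, y)) x) (ξ η : ℝ) :
    ft2 f' ξ η = Complex.I * ξ * ft2 f ξ η := by
  let e : ℝ × ℝ → ℂ := fun p => Complex.exp (-Complex.I * ((p.1 * ξ + p.2 * η : ℝ) : ℂ))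
  have he (x y : ℝ) : HasDerivAt (fun x => e (x, y)) (e (x, y) * (-Complex.I * ξ)) x := by
    have hphase : HasDerivAt (fun x : ℝ => x * ξ + y * η) ξ x := by
      simpa using ((hasDerivAt_id x).mul_const ξ).add_const (y * η)
    exact (hphase.ofReal_comp.const_mul _).cexp
  have hint : Integrable fun p => f' p * e p := integrable_mul_exp_neg_I hf' ξ η
  have hint' : Integrable fun p => f p * (e p * (-Complex.I * ξ)) := by
    simpa only [mul_assoc] using (integrable_mul_exp_neg_I hf ξ η).mul_const (-Complex.I * ξ)
  have hzero := integral_eq_zero_of_hasDerivAt_fst (integrable_mul_exp_neg_I hf ξ η)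
    (hint.add hint') fun x y => (hderiv x y).mul (he x y)
  have hsum : ft2 f' ξ η + ft2 f ξ η * (-Complex.I * ξ) = 0 := by
    rw [ft2, ft2, ← integral_mul_const, ← hzero, ← integral_add hint]
    · simp only [Pi.add_apply, mul_assoc, e]
    · simpa only [mul_assoc] using hint'
  linear_combination hsum

end PartialDerivative

section PowerWeights

lemma lintegral_comp_abs (φ : ℝ → ℝ≥0∞) :
    ∫⁻ x, φ |x| = 2 * ∫⁻ x in Set.Ioi (0 : ℝ), φ x := by
  have hpos : ∫⁻ x in Set.Ioi (0 : ℝ), φ |x| = ∫⁻ x in Set.Ioi (0 : ℝ), φ x :=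
    setLIntegral_congr_fun measurableSet_Ioi fun x hx => by rw [abs_of_pos hx]
  have hneg : ∫⁻ x in Set.Iic (0 : ℝ), φ |x| = ∫⁻ x in Set.Ioi (0 : ℝ), φ |x| := by
    rw [setLIntegral_congr Iio_ae_eq_Iic.symm]
    simpa using (Measure.measurePreserving_neg (volume : Measure ℝ)).setLIntegral_comp_preimage_emb
      (MeasurableEquiv.neg ℝ).measurableEmbedding (fun x => φ |x|) (Set.Ioi 0)
  rw [← lintegral_add_compl _ (measurableSet_Ioi (a := (0 : ℝ))), Set.compl_Ioi, hneg, hpos,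
    two_mul]

lemma measurableSet_abs_le (A : ℝ) : MeasurableSet {x : ℝ | |x| ≤ A} :=
  measurableSet_le (by fun_prop) (by fun_prop)

variable {s A : ℝ}

lemma setLIntegral_abs_rpow_of_abs_le (hs : -1 < s) (hA : 0 < A) :
    ∫⁻ x in {x : ℝ | |x| ≤ A}, ENNReal.ofReal (|x| ^ s) =
      ENNReal.ofReal (2 / (s + 1) * A ^ (s + 1)) := by
  have hind (x : ℝ) : Set.indicator {x : ℝ | |x| ≤ A} (fun x => ENNReal.ofReal (|x| ^ s)) x =
      Set.indicator (Set.Iic A) (fun x => ENNReal.ofReal (x ^ s)) |x| := by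
    simp [Set.indicator_apply]
  have hint : IntegrableOn (fun x : ℝ => x ^ s) (Set.Ioc 0 A) :=
    (intervalIntegrable_iff_integrableOn_Ioc_of_le hA.le).1
      (intervalIntegral.intervalIntegrable_rpow' hs)
  have hnonneg : 0 ≤ᵐ[volume.restrict (Set.Ioc 0 A)] fun x : ℝ => x ^ s :=
    ae_restrict_of_forall_mem measurableSet_Ioc fun x hx => Real.rpow_nonneg hx.1.le _
  rw [← lintegral_indicator (measurableSet_abs_le A)]
  simp only [hind]
  rw [lintegral_comp_abs, setLIntegral_indicator measurableSet_Iic, Set.inter_comm,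
    Set.Ioi_inter_Iic, ← ofReal_integral_eq_lintegral_ofReal hint hnonneg,
    ← intervalIntegral.integral_of_le hA.le, integral_rpow (Or.inl hs),
    Real.zero_rpow (by linarith), ← ENNReal.ofReal_ofNat 2, ← ENNReal.ofReal_mul zero_le_two]
  ring_nf

lemma setLIntegral_abs_rpow_of_lt_abs (hs : s < -1) (hA : 0 < A) :
    ∫⁻ x in {x : ℝ | |x| ≤ A}ᶜ, ENNReal.ofReal (|x| ^ s) =
      ENNReal.ofReal (2 / (-s - 1) * A ^ (s + 1)) := by
  have hind (x : ℝ) : Set.indicator {x : ℝ | |x| ≤ A}ᶜ (fun x => ENNReal.ofReal (|x| ^ s)) x =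
      Set.indicator (Set.Ioi A) (fun x => ENNReal.ofReal (x ^ s)) |x| := by
    simp [Set.indicator_apply]
  have hnonneg : 0 ≤ᵐ[volume.restrict (Set.Ioi A)] fun x : ℝ => x ^ s :=
    ae_restrict_of_forall_mem measurableSet_Ioi fun x hx =>
      Real.rpow_nonneg (hA.trans hx).le _
  rw [← lintegral_indicator (measurableSet_abs_le A).compl]
  simp only [hind]
  rw [lintegral_comp_abs, setLIntegral_indicator measurableSet_Ioi, Set.Ioi_inter_Ioi,
    sup_of_le_left hA.le,
    ← ofReal_integral_eq_lintegral_ofReal (integrableOn_Ioi_rpow_of_lt hs hA) hnonneg,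
    integral_Ioi_rpow_of_lt hs hA, ← ENNReal.ofReal_ofNat 2, ← ENNReal.ofReal_mul zero_le_two,
    show -s - 1 = -(s + 1) by ring, div_neg, neg_mul, neg_div]
  ring_nf

lemma eLpNorm_two_abs_rpow_eq {μ : Measure ℝ} {c : ℝ} (hc : 0 ≤ c) (hA : 0 < A)
    (h : ∫⁻ x, ENNReal.ofReal (|x| ^ (2 * s)) ∂μ = ENNReal.ofReal (c * A ^ (2 * s + 1))) :
    eLpNorm (fun x : ℝ => ENNReal.ofReal (|x| ^ s)) 2 μ =
      ENNReal.ofReal (√c * A ^ (s + 1 / 2)) := by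
  have hsq {x : ℝ} (hx : 0 ≤ x) (r : ℝ) : (x ^ r) ^ 2 = x ^ (2 * r) := by
    rw [mul_comm, Real.rpow_mul hx, Real.rpow_two]
  rw [← (ENNReal.pow_right_strictMono two_ne_zero).injective.eq_iff, eLpNorm_two_sq,
    ← ENNReal.ofReal_pow (by positivity), mul_pow, Real.sq_sqrt hc, hsq hA.le,
    show 2 * (s + 1 / 2) = 2 * s + 1 by ring, ← h]
  refine lintegral_congr fun x => ?_
  rw [enorm_eq_self, ← ENNReal.ofReal_pow (by positivity), hsq (abs_nonneg x)]

lemma setLIntegral_abs_rpow_mul_le_of_abs_le {u : ℝ → ℝ≥0∞} (hu : AEMeasurable u)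
    (hs : -1 / 2 < s) (hA : 0 < A) :
    ∫⁻ x in {x : ℝ | |x| ≤ A}, ENNReal.ofReal (|x| ^ s) * u x ≤
      ENNReal.ofReal (√(2 / (2 * s + 1)) * A ^ (s + 1 / 2)) * eLpNorm u 2 := by
  refine (lintegral_mul_le_eLpNorm_two_mul_eLpNorm_two (by fun_prop) hu.restrict).trans ?_
  rw [eLpNorm_two_abs_rpow_eq (div_nonneg zero_le_two (by linarith)) hA
    (setLIntegral_abs_rpow_of_abs_le (by linarith) hA)]
  exact mul_le_mul_right (eLpNorm_mono_measure _ Measure.restrict_le_self) _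

lemma setLIntegral_abs_rpow_mul_le_of_lt_abs {u : ℝ → ℝ≥0∞} (hu : AEMeasurable u)
    (hs : s < -1 / 2) (hA : 0 < A) :
    ∫⁻ x in {x : ℝ | |x| ≤ A}ᶜ, ENNReal.ofReal (|x| ^ s) * u x ≤
      ENNReal.ofReal (√(2 / (-(2 * s) - 1)) * A ^ (s + 1 / 2)) * eLpNorm u 2 := by
  refine (lintegral_mul_le_eLpNorm_two_mul_eLpNorm_two (by fun_prop) hu.restrict).trans ?_
  rw [eLpNorm_two_abs_rpow_eq (div_nonneg zero_le_two (by linarith)) hA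
    (setLIntegral_abs_rpow_of_lt_abs (by linarith) hA)]
  exact mul_le_mul_right (eLpNorm_mono_measure _ Measure.restrict_le_self) _

lemma lintegral_abs_rpow_mul_le_of_le {G : ℝ → ℝ≥0∞} (hG : AEMeasurable G) {B : ℝ≥0∞}
    (hGB : ∀ x, G x ≤ B) (hs : -1 < s) (hs' : s < -1 / 2) :
    ∫⁻ x, ENNReal.ofReal (|x| ^ s) * G x ≤
      ENNReal.ofReal (2 / (s + 1)) * B + ENNReal.ofReal √(2 / (-(2 * s) - 1)) * eLpNorm G 2 := by
  rw [← lintegral_add_compl _ (measurableSet_abs_le 1)]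
  gcongr ?_ + ?_
  · calc ∫⁻ x in {x : ℝ | |x| ≤ 1}, ENNReal.ofReal (|x| ^ s) * G x
        ≤ ∫⁻ x in {x : ℝ | |x| ≤ 1}, ENNReal.ofReal (|x| ^ s) * B := by
          gcongr; exact hGB _
      _ = ENNReal.ofReal (2 / (s + 1)) * B := by
          rw [lintegral_mul_const _ (by fun_prop), setLIntegral_abs_rpow_of_abs_le hs one_pos,
            Real.one_rpow, mul_one]
  · simpa only [Real.one_rpow, mul_one] using
      setLIntegral_abs_rpow_mul_le_of_lt_abs hG hs' one_pos

end PowerWeights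

section Interpolation

lemma le_mul_rpow_mul_rpow_of_forall_pos {I N M : ℝ≥0∞} {θ c d : ℝ} (hθ : 0 < θ) (hθ' : θ < 1)
    (hc : 0 < c) (hd : 0 ≤ d) (hzero : N = 0 ∨ M = 0 → I = 0)
    (h : ∀ A : ℝ, 0 < A →
      I ≤ ENNReal.ofReal (c * A ^ (1 - θ)) * N + ENNReal.ofReal (d * A ^ (-θ)) * M) :
    I ≤ ENNReal.ofReal (c + d) * N ^ θ * M ^ (1 - θ) := by
  by_cases h₀ : N = 0 ∨ M = 0
  · exact (hzero h₀).trans_le zero_le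
  obtain ⟨hN, hM⟩ := not_or.1 h₀
  have hC : ENNReal.ofReal (c + d) ≠ 0 := (ENNReal.ofReal_pos.2 (by linarith)).ne'
  rcases eq_or_ne N ⊤ with rfl | hN'
  · simp [ENNReal.top_rpow_of_pos hθ, ENNReal.mul_top hC,
      ENNReal.top_mul, ENNReal.rpow_eq_zero_iff, hM, hθ'.le]
  rcases eq_or_ne M ⊤ with rfl | hM'
  · simp [ENNReal.top_rpow_of_pos (sub_pos.2 hθ'), ENNReal.mul_top, hC, hN, hN',
      ENNReal.rpow_eq_zero_iff]
  have hn : 0 < N.toReal := ENNReal.toReal_pos hN hN'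
  have hm : 0 < M.toReal := ENNReal.toReal_pos hM hM'
  rw [← ENNReal.ofReal_toReal hN', ← ENNReal.ofReal_toReal hM'] at h ⊢
  set n := N.toReal
  set m := M.toReal
  have hfirst : (m / n) ^ (1 - θ) * n = n ^ θ * m ^ (1 - θ) := by
    rw [Real.div_rpow hm.le hn.le, div_mul_eq_mul_div, div_eq_iff (by positivity), mul_right_comm,
      ← Real.rpow_add hn, add_sub_cancel, Real.rpow_one, mul_comm]
  have hsecond : (m / n) ^ (-θ) * m = n ^ θ * m ^ (1 - θ) := by
    rw [Real.rpow_neg (by positivity), Real.div_rpow hm.le hn.le, Real.rpow_sub hm, Real.rpow_one]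
    field_simp
  refine (h (m / n) (by positivity)).trans_eq ?_
  rw [ENNReal.ofReal_rpow_of_pos hn, ENNReal.ofReal_rpow_of_pos hm,
    ← ENNReal.ofReal_mul (by positivity), ← ENNReal.ofReal_mul (by positivity),
    ← ENNReal.ofReal_add (by positivity) (by positivity), ← ENNReal.ofReal_mul (by positivity),
    ← ENNReal.ofReal_mul (by positivity)]
  congr 1
  linear_combination c * hfirst + d * hsecond

lemma lintegral_abs_rpow_neg_mul_le {u : ℝ → ℝ≥0∞} (hu : AEMeasurable u) {σ : ℝ}
    (hσ : -1 / 2 < σ) (hσ' : σ < 1 / 2) :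
    ∫⁻ x, ENNReal.ofReal (|x| ^ (-σ)) * u x ≤
      ENNReal.ofReal (√(2 / (1 - 2 * σ)) + √(2 / (1 + 2 * σ))) *
        eLpNorm u 2 ^ (1 / 2 + σ) *
          eLpNorm (fun x => ENNReal.ofReal |x| * u x) 2 ^ (1 / 2 - σ) := by
  have hxu : AEMeasurable fun x => ENNReal.ofReal |x| * u x := by fun_prop
  have hne : ∀ᵐ x : ℝ, x ≠ 0 := Measure.ae_ne volume 0
  have hpos : 0 < √(2 / (1 - 2 * σ)) := Real.sqrt_pos.2 (div_pos two_pos (by linarith))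
  rw [show 1 / 2 - σ = 1 - (1 / 2 + σ) by ring]
  refine le_mul_rpow_mul_rpow_of_forall_pos (by linarith) (by linarith) hpos (Real.sqrt_nonneg _)
    (fun hzero => ?_) fun A hA => ?_
  · have hu₀ : u =ᵐ[volume] 0 := by
      rcases hzero with h | h
      · exact (eLpNorm_eq_zero_iff hu.aestronglyMeasurable two_ne_zero).1 h
      · filter_upwards [(eLpNorm_eq_zero_iff hxu.aestronglyMeasurable two_ne_zero).1 h, hne]
          with x hx hx₀
        simpa [hx₀] using hx
    exact (lintegral_congr_ae (hu₀.mono fun x hx => by simp [hx])).trans lintegral_zero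
  · rw [← lintegral_add_compl _ (measurableSet_abs_le A)]
    gcongr ?_ + ?_
    · have hsmall := setLIntegral_abs_rpow_mul_le_of_abs_le hu (s := -σ) (by linarith) hA
      rwa [show 2 * -σ + 1 = 1 - 2 * σ by ring, show -σ + 1 / 2 = 1 - (1 / 2 + σ) by ring]
        at hsmall
    · have hshift (x : ℝ) (hx : x ∈ {x : ℝ | |x| ≤ A}ᶜ) : ENNReal.ofReal (|x| ^ (-σ)) * u x =
          ENNReal.ofReal (|x| ^ (-σ - 1)) * (ENNReal.ofReal |x| * u x) := by
        have hx₀ : |x| ≠ 0 := (hA.trans (not_le.1 hx)).ne'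
        rw [← mul_assoc, ← ENNReal.ofReal_mul (by positivity), ← Real.rpow_add_one hx₀,
          sub_add_cancel]
      rw [setLIntegral_congr_fun (measurableSet_abs_le A).compl hshift]
      have hlarge := setLIntegral_abs_rpow_mul_le_of_lt_abs hxu (s := -σ - 1) (by linarith) hA
      rwa [show -(2 * (-σ - 1)) - 1 = 1 + 2 * σ by ring,
        show -σ - 1 + 1 / 2 = -(1 / 2 + σ) by ring] at hlarge

end Interpolation

section MixedFourierIntegral

lemma lintegral_mul_rpow_mul_rpow_le {α : Type*} [MeasurableSpace α] {μ : Measure α}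
    {w f g : α → ℝ≥0∞} (hw : AEMeasurable w μ) (hf : AEMeasurable f μ) (hg : AEMeasurable g μ)
    {p q : ℝ} (hp : 0 ≤ p) (hq : 0 ≤ q) (hpq : p + q = 1) :
    ∫⁻ x, w x * (f x ^ p * g x ^ q) ∂μ ≤
      (∫⁻ x, w x * f x ∂μ) ^ p * (∫⁻ x, w x * g x ∂μ) ^ q := by
  refine le_of_eq_of_le (lintegral_congr fun x => ?_)
    (ENNReal.lintegral_mul_norm_pow_le (hw.mul hf) (hw.mul hg) hp hq hpq)
  simp only [Pi.mul_apply]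
  rw [ENNReal.mul_rpow_of_nonneg _ _ hp, ENNReal.mul_rpow_of_nonneg _ _ hq, mul_mul_mul_comm,
    ← ENNReal.rpow_add_of_nonneg _ _ hp hq, hpq, ENNReal.rpow_one]

variable {σ : ℝ} {f f' : ℝ × ℝ → ℂ}

lemma lintegral_abs_rpow_mul_eLpNorm_ft2_slice_le (hσ : 0 < σ) (hσ' : σ < 1 / 2)
    (hf : Integrable f) :
    ∫⁻ η, ENNReal.ofReal (|η| ^ (σ - 1)) * eLpNorm (fun ξ => ft2 f ξ η) 2 ≤
      ENNReal.ofReal ((2 / σ + √(2 / (1 - 2 * σ))) * (2 * Real.pi)) * wnorm 1 f := by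
  refine (lintegral_abs_rpow_mul_le_of_le (measurable_eLpNorm_ft2_slice hf).aemeasurable
    (eLpNorm_ft2_slice_le_wnorm hf) (by linarith) (by linarith)).trans ?_
  rw [sub_add_cancel, show -(2 * (σ - 1)) - 1 = 1 - 2 * σ by ring,
    ENNReal.ofReal_mul (q := 2 * Real.pi) (by positivity),
    ENNReal.ofReal_add (by positivity) (by positivity), mul_assoc, add_mul]
  gcongr
  exact eLpNorm_eLpNorm_ft2_le_wnorm hf

/-- The integral `∫∫ |ξ|^(-σ) |η|^(σ-1) |f̂(ξ,η)| dξ dη`. Its weight is homogeneous of degree `-1`,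
like the multipliers `ξ / q_t` and `η / q_t`, and is integrated one variable at a time. -/
noncomputable def mixedFourierIntegral (σ : ℝ) (f : ℝ × ℝ → ℂ) : ℝ≥0∞ :=
  ∫⁻ w : ℝ × ℝ, ENNReal.ofReal (|w.1| ^ (-σ) * |w.2| ^ (σ - 1)) * ‖ft2 f w.1 w.2‖ₑ

lemma mixedFourierIntegral_eq_lintegral_lintegral (hf : Integrable f) :
    mixedFourierIntegral σ f = ∫⁻ η, ENNReal.ofReal (|η| ^ (σ - 1)) *
      ∫⁻ ξ, ENNReal.ofReal (|ξ| ^ (-σ)) * ‖ft2 f ξ η‖ₑ := by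
  have hmeas : Measurable fun w : ℝ × ℝ => ‖ft2 f w.1 w.2‖ₑ := (continuous_ft2 hf).enorm.measurable
  rw [mixedFourierIntegral, Measure.volume_eq_prod, lintegral_prod_symm' _ (by fun_prop)]
  refine lintegral_congr fun η => ?_
  rw [← lintegral_const_mul' _ _ ENNReal.ofReal_ne_top]
  refine lintegral_congr fun ξ => ?_
  rw [mul_comm (|ξ| ^ (-σ)), ENNReal.ofReal_mul (by positivity), mul_assoc]

lemma lintegral_abs_rpow_neg_mul_enorm_ft2_le (hσ : -1 / 2 < σ) (hσ' : σ < 1 / 2)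
    (hf : Integrable f) (hf' : Integrable f')
    (hderiv : ∀ x y, HasDerivAt (fun x => f (x, y)) (f' (x, y)) x) (η : ℝ) :
    ∫⁻ ξ, ENNReal.ofReal (|ξ| ^ (-σ)) * ‖ft2 f ξ η‖ₑ ≤
      ENNReal.ofReal (√(2 / (1 - 2 * σ)) + √(2 / (1 + 2 * σ))) *
        (eLpNorm (fun ξ => ft2 f ξ η) 2 ^ (1 / 2 + σ) *
          eLpNorm (fun ξ => ft2 f' ξ η) 2 ^ (1 / 2 - σ)) := by
  have hmeas : Measurable fun ξ => ‖ft2 f ξ η‖ₑ :=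
    ((continuous_ft2 hf).comp (Continuous.prodMk_left η)).enorm.measurable
  have hmul (ξ : ℝ) : ENNReal.ofReal |ξ| * ‖ft2 f ξ η‖ₑ = ‖ft2 f' ξ η‖ₑ := by
    rw [ft2_of_hasDerivAt_fst hf hf' hderiv, enorm_mul, enorm_mul, ← ofReal_norm Complex.I,
      Complex.norm_I, ENNReal.ofReal_one, one_mul, ← ofReal_norm (ξ : ℂ), Complex.norm_real,
      Real.norm_eq_abs]
  have hinterp := lintegral_abs_rpow_neg_mul_le hmeas.aemeasurable hσ hσ'
  simpa only [hmul, eLpNorm_enorm, mul_assoc] using hinterp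

lemma mixedFourierIntegral_le_mul_rpow_mul_rpow (hσ : -1 / 2 < σ) (hσ' : σ < 1 / 2)
    (hf : Integrable f) (hf' : Integrable f')
    (hderiv : ∀ x y, HasDerivAt (fun x => f (x, y)) (f' (x, y)) x) :
    mixedFourierIntegral σ f ≤
      ENNReal.ofReal (√(2 / (1 - 2 * σ)) + √(2 / (1 + 2 * σ))) *
        ((∫⁻ η, ENNReal.ofReal (|η| ^ (σ - 1)) * eLpNorm (fun ξ => ft2 f ξ η) 2) ^ (1 / 2 + σ) *
          (∫⁻ η, ENNReal.ofReal (|η| ^ (σ - 1)) * eLpNorm (fun ξ => ft2 f' ξ η) 2) ^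
            (1 / 2 - σ)) := by
  rw [mixedFourierIntegral_eq_lintegral_lintegral hf]
  refine (lintegral_mono fun η => mul_le_mul_right
    (lintegral_abs_rpow_neg_mul_enorm_ft2_le hσ hσ' hf hf' hderiv η) _).trans ?_
  simp only [mul_left_comm _ (ENNReal.ofReal (_ + _))]
  rw [lintegral_const_mul' _ _ ENNReal.ofReal_ne_top]
  exact mul_le_mul_right (lintegral_mul_rpow_mul_rpow_le (by fun_prop)
    (measurable_eLpNorm_ft2_slice hf).aemeasurable
    (measurable_eLpNorm_ft2_slice hf').aemeasurable
    (by linarith) (by linarith) (by ring)) _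

lemma exists_mixedFourierIntegral_le (hσ : 0 < σ) (hσ' : σ < 1 / 2) :
    ∃ K : ℝ, 0 < K ∧ ∀ f f' : ℝ × ℝ → ℂ, Integrable f → Integrable f' →
      (∀ x y, HasDerivAt (fun x => f (x, y)) (f' (x, y)) x) →
      mixedFourierIntegral σ f ≤
        ENNReal.ofReal K * wnorm 1 f ^ (1 / 2 + σ) * wnorm 1 f' ^ (1 / 2 - σ) := by
  let a := √(2 / (1 - 2 * σ)) + √(2 / (1 + 2 * σ))
  let b := (2 / σ + √(2 / (1 - 2 * σ))) * (2 * Real.pi)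
  have ha : 0 < a := add_pos_of_nonneg_of_pos (by positivity) (by positivity)
  have hb : 0 < b := by positivity
  refine ⟨a * b, mul_pos ha hb, fun f f' hf hf' hderiv => ?_⟩
  have hp : 0 ≤ 1 / 2 + σ := by linarith
  have hq : 0 ≤ 1 / 2 - σ := by linarith
  calc mixedFourierIntegral σ f
      ≤ ENNReal.ofReal a * ((ENNReal.ofReal b * wnorm 1 f) ^ (1 / 2 + σ) *
          (ENNReal.ofReal b * wnorm 1 f') ^ (1 / 2 - σ)) := by
        refine (mixedFourierIntegral_le_mul_rpow_mul_rpow (by linarith) hσ' hf hf' hderiv).trans ?_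
        gcongr
        · exact lintegral_abs_rpow_mul_eLpNorm_ft2_slice_le hσ hσ' hf
        · exact lintegral_abs_rpow_mul_eLpNorm_ft2_slice_le hσ hσ' hf'
    _ = _ := by
        rw [ENNReal.mul_rpow_of_nonneg _ _ hp, ENNReal.mul_rpow_of_nonneg _ _ hq, mul_mul_mul_comm,
          ← ENNReal.rpow_add_of_nonneg _ _ hp hq, add_add_sub_cancel, add_halves,
          ENNReal.rpow_one, ENNReal.ofReal_mul ha.le]
        ring

end MixedFourierIntegral

section Symbol

variable {t ξ η : ℝ}

lemma sq_snd_le_qsym (t ξ η : ℝ) : η ^ 2 ≤ qsym t ξ η := by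
  have hratio : 1 ≤ (1 + t ^ 2 / 3) * (1 + t ^ 2 / 12)⁻¹ := by
    rw [← div_eq_mul_inv, one_le_div (by positivity)]
    nlinarith [sq_nonneg t]
  exact le_add_of_nonneg_of_le (by positivity) (le_mul_of_one_le_left (sq_nonneg η) hratio)

lemma sq_fst_le_qsym (t ξ η : ℝ) : ξ ^ 2 ≤ (1 + t ^ 2) * qsym t ξ η := by
  set a := 1 + t ^ 2 / 3 with ha
  set d := 1 + t ^ 2 / 12
  set s := t / 2 * d ^ (-(1 : ℝ) / 2) with hs
  have ha₀ : 1 ≤ a := by simp only [ha]; linarith [sq_nonneg t]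
  have hd₀ : 0 < d := by positivity
  have hq : qsym t ξ η = a⁻¹ * (ξ - s * η) ^ 2 + a * d⁻¹ * η ^ 2 := rfl
  have hsd : s ^ 2 * d = t ^ 2 / 4 := by
    rw [hs, mul_pow, ← Real.rpow_mul_natCast hd₀.le, mul_assoc, ← Real.rpow_add_one hd₀.ne']
    norm_num [div_pow]
  have hcauchy : (a + s ^ 2 * d / a) * qsym t ξ η =
      ξ ^ 2 + d⁻¹ * (a * η - s * d / a * (ξ - s * η)) ^ 2 := by
    rw [hq]
    field_simp
    ring
  have hcoeff : a + s ^ 2 * d / a ≤ 1 + t ^ 2 := by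
    have := div_le_self (sq_nonneg t) ha₀
    rw [hsd, div_right_comm]
    linarith [sq_nonneg t]
  calc ξ ^ 2 ≤ (a + s ^ 2 * d / a) * qsym t ξ η := by
        rw [hcauchy]; exact le_add_of_nonneg_right (by positivity)
    _ ≤ _ := mul_le_mul_of_nonneg_right hcoeff ((sq_nonneg η).trans (sq_snd_le_qsym t ξ η))

lemma abs_rpow_mul_abs_rpow_le_qsym {α : ℝ} (hα : 0 ≤ α) (hα' : α ≤ 2) (t ξ η : ℝ) :
    |ξ| ^ α * |η| ^ (2 - α) ≤ √(1 + t ^ 2) ^ α * qsym t ξ η := by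
  have hq : 0 ≤ qsym t ξ η := (sq_nonneg η).trans (sq_snd_le_qsym t ξ η)
  have hξ : |ξ| ≤ √(1 + t ^ 2) * √(qsym t ξ η) := by
    rw [← Real.sqrt_mul (by positivity)]
    exact Real.abs_le_sqrt (sq_fst_le_qsym t ξ η)
  have hη : |η| ≤ √(qsym t ξ η) := Real.abs_le_sqrt (sq_snd_le_qsym t ξ η)
  calc |ξ| ^ α * |η| ^ (2 - α)
      ≤ (√(1 + t ^ 2) * √(qsym t ξ η)) ^ α * √(qsym t ξ η) ^ (2 - α) := by
        gcongr
    _ = √(1 + t ^ 2) ^ α * qsym t ξ η := by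
        rw [Real.mul_rpow (by positivity) (by positivity), mul_assoc,
          ← Real.rpow_add_of_nonneg (by positivity) hα (by linarith), add_sub_cancel,
          Real.rpow_two, Real.sq_sqrt hq]

lemma inv_qsym_le {α : ℝ} (hα : 0 ≤ α) (hα' : α ≤ 2) (hξ : ξ ≠ 0) (hη : η ≠ 0) :
    (qsym t ξ η)⁻¹ ≤ √(1 + t ^ 2) ^ α * (|ξ| ^ (-α) * |η| ^ (α - 2)) := by
  have hq : 0 < qsym t ξ η := (sq_pos_of_ne_zero hη).trans_le (sq_snd_le_qsym t ξ η)
  have hξ' : 0 < |ξ| := abs_pos.2 hξ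
  have hη' : 0 < |η| := abs_pos.2 hη
  rw [← neg_sub, Real.rpow_neg hξ'.le, Real.rpow_neg hη'.le, ← mul_inv, ← div_eq_mul_inv,
    inv_le_iff_one_le_mul₀ hq, div_mul_eq_mul_div, one_le_div (by positivity)]
  exact abs_rpow_mul_abs_rpow_le_qsym hα hα' t ξ η

lemma abs_fst_div_qsym_le {σ : ℝ} (hσ : -1 ≤ σ) (hσ' : σ ≤ 1) (hξ : ξ ≠ 0) (hη : η ≠ 0) :
    |ξ| / qsym t ξ η ≤ √(1 + t ^ 2) ^ (1 + σ) * (|ξ| ^ (-σ) * |η| ^ (σ - 1)) := by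
  have h := mul_le_mul_of_nonneg_left
    (inv_qsym_le (t := t) (α := 1 + σ) (by linarith) (by linarith) hξ hη) (abs_nonneg ξ)
  rw [show -σ = -(1 + σ) + 1 by ring, Real.rpow_add_one (abs_ne_zero.2 hξ),
    show σ - 1 = 1 + σ - 2 by ring, div_eq_mul_inv]
  linarith

lemma abs_snd_div_qsym_le {σ : ℝ} (hσ : 0 ≤ σ) (hσ' : σ ≤ 2) (hξ : ξ ≠ 0) (hη : η ≠ 0) :
    |η| / qsym t ξ η ≤ √(1 + t ^ 2) ^ σ * (|ξ| ^ (-σ) * |η| ^ (σ - 1)) := by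
  have h := mul_le_mul_of_nonneg_left (inv_qsym_le (t := t) hσ hσ' hξ hη) (abs_nonneg η)
  rw [show σ - 1 = σ - 2 + 1 by ring, Real.rpow_add_one (abs_ne_zero.2 hη), div_eq_mul_inv]
  linarith

end Symbol

section FourierMultiplier

variable {σ : ℝ}

lemma eLpNorm_top_fourierMultiplier_le {f m : ℝ × ℝ → ℂ} {S : ℝ} (hS : 0 ≤ S)
    (hm : ∀ w : ℝ × ℝ, w.1 ≠ 0 → w.2 ≠ 0 → ‖m w‖ ≤ S * (|w.1| ^ (-σ) * |w.2| ^ (σ - 1))) :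
    eLpNorm (fun P : ℝ × ℝ => (((2 * Real.pi) ^ (-2 : ℤ) : ℝ) : ℂ) *
      ∫ w : ℝ × ℝ, m w * ft2 f w.1 w.2 *
        Complex.exp (Complex.I * ((P.1 * w.1 + P.2 * w.2 : ℝ) : ℂ))) ⊤ ≤
      ENNReal.ofReal S * mixedFourierIntegral σ f := by
  have hconst : ‖(((2 * Real.pi) ^ (-2 : ℤ) : ℝ) : ℂ)‖ₑ ≤ 1 := by
    rw [← ofReal_norm, Complex.norm_real, Real.norm_of_nonneg (by positivity),
      ENNReal.ofReal_le_one, zpow_neg]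
    exact inv_le_one_of_one_le₀ (one_le_zpow₀ (by linarith [Real.pi_gt_three]) (by norm_num))
  have hne : ∀ᵐ x : ℝ, x ≠ 0 := Measure.ae_ne volume 0
  have haxes : ∀ᵐ w : ℝ × ℝ, w.1 ≠ 0 ∧ w.2 ≠ 0 :=
    (Measure.quasiMeasurePreserving_fst.ae hne).and (Measure.quasiMeasurePreserving_snd.ae hne)
  rw [eLpNorm_exponent_top]
  refine eLpNormEssSup_le_of_ae_enorm_bound (.of_forall fun P => ?_)
  rw [enorm_mul]
  refine (mul_le_of_le_one_left' hconst).trans ((enorm_integral_le_lintegral_enorm _).trans ?_)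
  rw [mixedFourierIntegral, ← lintegral_const_mul' _ _ ENNReal.ofReal_ne_top]
  refine lintegral_mono_ae (haxes.mono fun w hw => ?_)
  rw [enorm_mul, enorm_mul, mul_comm Complex.I, Complex.enorm_exp_ofReal_mul_I, mul_one,
    ← mul_assoc, ← ENNReal.ofReal_mul hS, ← ofReal_norm (m w)]
  gcongr
  exact hm w hw.1 hw.2

lemma norm_neg_I_mul_div_qsym (a t ξ η : ℝ) :
    ‖-Complex.I * (a : ℂ) / ((qsym t ξ η : ℝ) : ℂ)‖ = |a| / qsym t ξ η := by
  rw [norm_div, norm_mul, norm_neg, Complex.norm_I, one_mul, Complex.norm_real, Complex.norm_real,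
    Real.norm_eq_abs, Real.norm_of_nonneg ((sq_nonneg η).trans (sq_snd_le_qsym t ξ η))]

lemma eLpNorm_top_dxInvLap_le (hσ : -1 ≤ σ) (hσ' : σ ≤ 1) (t : ℝ) (f : ℝ × ℝ → ℂ) :
    eLpNorm (dxInvLap t f) ⊤ ≤
      ENNReal.ofReal (√(1 + t ^ 2) ^ (1 + σ)) * mixedFourierIntegral σ f :=
  eLpNorm_top_fourierMultiplier_le (by positivity) fun w hξ hη =>
    (norm_neg_I_mul_div_qsym _ _ _ _).trans_le (abs_fst_div_qsym_le hσ hσ' hξ hη)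

lemma eLpNorm_top_dyInvLap_le (hσ : 0 ≤ σ) (hσ' : σ ≤ 2) (t : ℝ) (f : ℝ × ℝ → ℂ) :
    eLpNorm (dyInvLap t f) ⊤ ≤
      ENNReal.ofReal (√(1 + t ^ 2) ^ σ) * mixedFourierIntegral σ f :=
  eLpNorm_top_fourierMultiplier_le (by positivity) fun w hξ hη =>
    (norm_neg_I_mul_div_qsym _ _ _ _).trans_le (abs_snd_div_qsym_le hσ hσ' hξ hη)

end FourierMultiplier

theorem stmt_10_general (σ : ℝ) (hσ : 0 < σ) (hσ' : σ < 1 / 2) :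
    ∃ C : ℝ, 0 < C ∧
      ∀ t : ℝ, ∀ f f' : ℝ × ℝ → ℂ, Integrable f → Integrable f' →
        (∀ x y, HasDerivAt (fun x => f (x, y)) (f' (x, y)) x) →
          eLpNorm (dxInvLap t f) ⊤ +
              ENNReal.ofReal (Real.sqrt (1 + t ^ 2)) * eLpNorm (dyInvLap t f) ⊤ ≤
            ENNReal.ofReal (C * Real.sqrt (1 + t ^ 2) ^ (1 + σ)) *
              wnorm 1 f ^ ((1 : ℝ) / 2 + σ) * wnorm 1 f' ^ ((1 : ℝ) / 2 - σ) := by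
  obtain ⟨K, hK, hmixed⟩ := exists_mixedFourierIntegral_le hσ hσ'
  refine ⟨2 * K, by positivity, fun t f f' hf hf' hderiv => ?_⟩
  have hT : 0 < √(1 + t ^ 2) := by positivity
  have hsymbol :
      eLpNorm (dxInvLap t f) ⊤ + ENNReal.ofReal √(1 + t ^ 2) * eLpNorm (dyInvLap t f) ⊤ ≤
        ENNReal.ofReal (2 * √(1 + t ^ 2) ^ (1 + σ)) * mixedFourierIntegral σ f := by
    refine (add_le_add (eLpNorm_top_dxInvLap_le (σ := σ) (by linarith) (by linarith) t f)
      (mul_le_mul_right (eLpNorm_top_dyInvLap_le hσ.le (by linarith) t f) _)).trans_eq ?_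
    rw [← mul_assoc, ← ENNReal.ofReal_mul hT.le, ← add_mul,
      ← ENNReal.ofReal_add (by positivity) (by positivity), Real.rpow_add hT, Real.rpow_one,
      two_mul]
  refine hsymbol.trans ((mul_le_mul_right (hmixed f f' hf hf' hderiv) _).trans_eq ?_)
  rw [mul_right_comm 2 K, ENNReal.ofReal_mul (q := K) (by positivity), mul_assoc, mul_assoc,
    mul_assoc]

section SchwartzFunctions

lemma wnorm_ofReal_comp (m : ℝ) (f : ℝ × ℝ → ℝ) : wnorm m (fun p => (f p : ℂ)) = wnorm m f := by
  simp only [wnorm, Complex.norm_real]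

variable (f : 𝓢(ℝ × ℝ, ℝ))

lemma integrable_ofReal_comp : Integrable fun p => (f p : ℂ) := f.integrable.ofReal

lemma hasDerivAt_lineDerivOp_fst (x y : ℝ) :
    HasDerivAt (fun x => f (x, y)) (LineDeriv.lineDerivOp ((1 : ℝ), (0 : ℝ)) f (x, y)) x := by
  rw [SchwartzMap.lineDerivOp_apply_eq_fderiv]
  have hline : HasDerivAt (fun x : ℝ => (x, y)) ((1 : ℝ), (0 : ℝ)) x :=
    (hasDerivAt_id x).prodMk (hasDerivAt_const x y)
  exact (f.differentiableAt.hasFDerivAt (x := (x, y))).comp_hasDerivAt x hline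

lemma pderivX_eq_lineDerivOp : pderivX f = LineDeriv.lineDerivOp ((1 : ℝ), (0 : ℝ)) f :=
  funext fun p => (hasDerivAt_lineDerivOp_fst f p.1 p.2).deriv

end SchwartzFunctions

/-- Lemma 3.2: for `0 < σ < 1/2` there is `C = C(σ) > 0` such that for all `t > 0` and
Schwartz `f`, `‖∂_X Δ_t⁻¹ f‖_{L^∞} + ⟨t⟩ ‖∂_Y Δ_t⁻¹ f‖_{L^∞} ≤
C ⟨t⟩^{1+σ} ‖f‖_{L²(1)}^{1/2+σ} ‖∂_X f‖_{L²(1)}^{1/2-σ}`. -/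
theorem stmt_10 (σ : ℝ) (hσ : 0 < σ) (hσ' : σ < 1 / 2) :
    ∃ C : ℝ, 0 < C ∧
      ∀ t : ℝ, 0 < t →
        ∀ f : 𝓢(ℝ × ℝ, ℝ),
          eLpNorm (dxInvLap t (fun p => (f p : ℂ))) ⊤ +
              ENNReal.ofReal (Real.sqrt (1 + t ^ 2)) *
                eLpNorm (dyInvLap t (fun p => (f p : ℂ))) ⊤ ≤
            ENNReal.ofReal (C * Real.sqrt (1 + t ^ 2) ^ (1 + σ)) *
              wnorm 1 (fun p => f p) ^ ((1 : ℝ) / 2 + σ) *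
              wnorm 1 (pderivX fun p => f p) ^ ((1 : ℝ) / 2 - σ) := by
  obtain ⟨C, hC, hbound⟩ := stmt_10_general σ hσ hσ'
  refine ⟨C, hC, fun t _ f => ?_⟩
  have h := hbound t _ _ (integrable_ofReal_comp f)
    (integrable_ofReal_comp (LineDeriv.lineDerivOp ((1 : ℝ), (0 : ℝ)) f))
    fun x y => (hasDerivAt_lineDerivOp_fst f x y).ofReal_comp
  rwa [wnorm_ofReal_comp, wnorm_ofReal_comp, ← pderivX_eq_lineDerivOp] at h
end
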